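/- For every prime p and every integer N ≥ 2, the integral 𝒵_N(ℙ¹(ℚ_p), s) converges absolutely if and only if s ∈ Ω_N, and in this case 𝒵_N(ℙ¹(ℚ_p), s) = (1/(p+1)^{N−1}) · Σ_{𝔖 ∈ ℛ_N} [(p^{N + Σ_{i<j} s_{ij}} + 1 − deg_𝔖([N])) / (p + 1 − deg_𝔖([N]))] · ∏_{λ ∈ ℬ(𝔖)} (p−1)_{deg_𝔖(λ)−1} / (p^{e_λ(s)} − 1), where the summand for each 𝔖 is well-defined even when deg_𝔖([N]) = p+1, via the cancellation (p−1)_{deg_𝔖([N])−1}/(p + 1 − deg_𝔖([N])) = (p−1)_{deg_𝔖([N])−2}. -/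

import Mathlib

open MeasureTheory
open scoped LinearAlgebra.Projectivization

namespace LogCoulomb

noncomputable section

/-! ### The projective line over `ℚ_p`, its spherical metric and `PGL₂`-invariant measure -/

variable (p : ℕ) [Fact p.Prime]

instance : MeasurableSpace ℚ_[p] := borel _
instance : BorelSpace ℚ_[p] := ⟨rfl⟩

/-- The projective line over `ℚ_p`. -/
abbrev P1 := ℙ ℚ_[p] (Fin 2 → ℚ_[p])

instance : TopologicalSpace (P1 p) :=
  inferInstanceAs (TopologicalSpace (Quotient _))

instance : MeasurableSpace (P1 p) := borel _
instance : BorelSpace (P1 p) := ⟨rfl⟩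

/-- Spherical distance on homogeneous coordinates:
`δ((x₀,x₁),(y₀,y₁)) = |x₀y₁ - x₁y₀| / (max(|x₀|,|x₁|) ⬝ max(|y₀|,|y₁|))`. -/
def sdelta (x y : Fin 2 → ℚ_[p]) : ℝ :=
  ‖x 0 * y 1 - x 1 * y 0‖ / (max ‖x 0‖ ‖x 1‖ * max ‖y 0‖ ‖y 1‖)

/-- The spherical metric on `ℙ¹(ℚ_p)`, defined via the canonical representatives. -/
def pdelta (ξ η : P1 p) : ℝ := sdelta p ξ.rep η.rep

open Classical in
/-- The action of a matrix on `ℙ¹(ℚ_p)`: `[x₀:x₁] ↦ [a x₀ + b x₁ : c x₀ + d x₁]`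
(well-defined, and given by the first branch of the `if`, whenever `A` is invertible). -/
def mobius (A : Matrix (Fin 2) (Fin 2) ℚ_[p]) (ξ : P1 p) : P1 p :=
  if h : A.mulVec ξ.rep ≠ 0 then Projectivization.mk ℚ_[p] (A.mulVec ξ.rep) h else ξ

/-- `ν` is invariant under the action of `GL₂(ℤ_p)` on `ℙ¹(ℚ_p)`; membership of the matrix
entries in `ℤ_p`, and invertibility of the matrix over `ℤ_p`, are phrased via the `p`-adic
norm on `ℚ_p`. -/
def IsGLInvariant (ν : Measure (P1 p)) : Prop :=
  ∀ A : Matrix (Fin 2) (Fin 2) ℚ_[p],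
    (∀ i j, ‖A i j‖ ≤ 1) → ‖A.det‖ = 1 →
      ∀ M : Set (P1 p), MeasurableSet M → ν (mobius p A '' M) = ν M

/-- The embedding `ι : ℚ_p → ℙ¹(ℚ_p)`, `x ↦ [x : 1]`. -/
def iota (x : ℚ_[p]) : P1 p :=
  Projectivization.mk ℚ_[p] ![x, 1] (by
    intro h
    have h1 := congrFun h 1
    simp at h1)

/-! ### Canonical partition functions -/

/-- The pairs `(i,j)` with `i < j`. -/
def pairs (N : ℕ) : Finset (Fin N × Fin N) := Finset.univ.filter fun q => q.1 < q.2

/-- The closed unit ball `ℤ_p = R` inside `ℚ_p`. -/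
def Zball : Set ℚ_[p] := {x | ‖x‖ ≤ 1}

/-- The open unit ball `pℤ_p = P` inside `ℚ_p`. -/
def Pball : Set ℚ_[p] := {x | ‖x‖ < 1}

/-- The one-component canonical partition function
`Z_N(X, β) = ∫_{X^N} ∏_{i<j} |x_i - x_j|^β dμ^N` (as a Bochner integral, whether or not it
converges absolutely). -/
def ZN (μ : Measure ℚ_[p]) [SigmaFinite μ] (X : Set ℚ_[p]) (N : ℕ) (β : ℂ) : ℂ :=
  ∫ x : Fin N → ℚ_[p], ∏ q ∈ pairs N, (‖x q.1 - x q.2‖ : ℂ) ^ β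
    ∂(Measure.pi fun _ => μ.restrict X)

/-- The multivariate canonical partition function
`𝒵_I(X, s) = ∫_{X^I} ∏_{i<j, i,j ∈ I} |x_i - x_j|^{s_{ij}} dμ^I` for a subset `I ⊆ [N]`. -/
def ZI (μ : Measure ℚ_[p]) [SigmaFinite μ] (X : Set ℚ_[p]) {N : ℕ} (I : Finset (Fin N))
    (s : Fin N → Fin N → ℂ) : ℂ :=
  ∫ x : I → ℚ_[p],
    ∏ q ∈ Finset.univ.filter (fun q : (↥I) × (↥I) => (q.1 : Fin N) < (q.2 : Fin N)),
      (‖x q.1 - x q.2‖ : ℂ) ^ s q.1.1 q.2.1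
    ∂(Measure.pi fun _ => μ.restrict X)

/-- The multivariate canonical partition function
`𝒵_N(ℙ¹(ℚ_p), s) = ∫_{(ℙ¹(ℚ_p))^N} ∏_{i<j} δ(ξ_i,ξ_j)^{s_{ij}} dν^N`. -/
def ZP1s (ν : Measure (P1 p)) [SigmaFinite ν] (N : ℕ) (s : Fin N → Fin N → ℂ) : ℂ :=
  ∫ x : Fin N → P1 p, ∏ q ∈ pairs N, ((pdelta p (x q.1) (x q.2) : ℝ) : ℂ) ^ s q.1 q.2
    ∂(Measure.pi fun _ => ν)

/-- The one-component canonical partition function `Z_N(ℙ¹(ℚ_p), β)`. -/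
def ZP1 (ν : Measure (P1 p)) [SigmaFinite ν] (N : ℕ) (β : ℂ) : ℂ :=
  ∫ x : Fin N → P1 p, ∏ q ∈ pairs N, ((pdelta p (x q.1) (x q.2) : ℝ) : ℂ) ^ β
    ∂(Measure.pi fun _ => ν)

/-! ### The quadratic recurrence -/

/-- The factor `ρ_{N,k}(t,β)` appearing in the quadratic recurrence; here
`N.choose 2 = N(N-1)/2`. -/
def rho (N k : ℕ) (t : ℝ) (β : ℂ) : ℂ :=
  if t = 0 then
    (((N : ℂ) + (N.choose 2 : ℂ) * β) * (1 - 2 * (k : ℂ) / (N : ℂ)) + 1) /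
      (((N : ℂ) + (N.choose 2 : ℂ) * β) - 1)
  else
    Complex.sinh (((t : ℂ) / 2) * (((N : ℂ) + (N.choose 2 : ℂ) * β) * (1 - 2 * (k : ℂ) / (N : ℂ)) + 1)) /
      Complex.sinh (((t : ℂ) / 2) * (((N : ℂ) + (N.choose 2 : ℂ) * β) - 1))

/-- The quadratic recurrence: `F 0 = F 1 = 1` and
`F N t β = ∑_{k=1}^{N-1} (k/N) ρ_{N,k}(t,β) F_{N-k}(t,β) F_k(t,β)` for `N ≥ 2`. -/
def F : ℕ → ℝ → ℂ → ℂ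
  | 0, _, _ => 1
  | 1, _, _ => 1
  | N + 2, t, β =>
    ∑ k ∈ (Finset.Icc 1 (N + 1)).attach,
      (((k : ℕ) : ℂ) / ((N : ℂ) + 2)) * rho (N + 2) k t β *
        F (N + 2 - (k : ℕ)) t β * F (k : ℕ) t β
  decreasing_by
  all_goals
    have hk := Finset.mem_Icc.mp k.2
    omega

/-! ### Splitting chains -/

/-- A splitting chain `Λ_0 > Λ_1 > ⋯ > Λ_L` of set partitions of the subset `I ⊆ [N]`,
beginning with the trivial partition `{I}` and ending with the partition of `I` into
singletons.  (The values `Λ ℓ` for `ℓ > L` are required to be `∅`, so that a chain is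
determined by the genuine data `Λ_0, …, Λ_L`.) -/
structure SplChain (N : ℕ) (I : Finset (Fin N)) where
  L : ℕ
  Λ : ℕ → Finset (Finset (Fin N))
  nonempty_mem : ∀ ℓ ≤ L, ∀ B ∈ Λ ℓ, B.Nonempty
  subset_mem : ∀ ℓ ≤ L, ∀ B ∈ Λ ℓ, B ⊆ I
  cover : ∀ ℓ ≤ L, ∀ i ∈ I, ∃! B, B ∈ Λ ℓ ∧ i ∈ B
  first : Λ 0 = {I}
  last : Λ L = I.image fun i => {i}
  refines : ∀ ℓ < L, ∀ B ∈ Λ (ℓ + 1), ∃ C ∈ Λ ℓ, B ⊆ C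
  strict : ∀ ℓ < L, Λ (ℓ + 1) ≠ Λ ℓ
  trailing : ∀ ℓ, L < ℓ → Λ ℓ = ∅

variable {N : ℕ} {I : Finset (Fin N)}

/-- The branches of a splitting chain: the non-singleton parts,
`ℬ(𝔖) = (Λ_0 ∪ ⋯ ∪ Λ_{L-1}) \ Λ_L`. -/
def SplChain.branches (S : SplChain N I) : Finset (Finset (Fin N)) :=
  ((Finset.range S.L).biUnion S.Λ) \ S.Λ S.L

/-- The depth `ℓ_𝔖(λ) = max {ℓ : λ ∈ Λ_ℓ}` of a branch. -/
def SplChain.depth (S : SplChain N I) (lam : Finset (Fin N)) : ℕ :=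
  ((Finset.range (S.L + 1)).filter fun ℓ => lam ∈ S.Λ ℓ).sup id

/-- The degree `deg_𝔖(λ) = #{λ' ∈ Λ_{ℓ_𝔖(λ)+1} : λ' ⊆ λ}` of a branch. -/
def SplChain.degree (S : SplChain N I) (lam : Finset (Fin N)) : ℕ :=
  ((S.Λ (S.depth lam + 1)).filter fun lam' => lam' ⊆ lam).card

/-- A splitting chain is reduced if every branch appears in exactly one partition of the
chain (namely the one at its depth). -/
def SplChain.Reduced (S : SplChain N I) : Prop :=
  ∀ lam ∈ S.branches, ∀ ℓ ≤ S.L, (lam ∈ S.Λ ℓ ↔ ℓ = S.depth lam)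

/-- `e_λ(s) = #λ - 1 + ∑_{i<j, i,j ∈ λ} s_{ij}`. -/
def eexp (lam : Finset (Fin N)) (s : Fin N → Fin N → ℂ) : ℂ :=
  (lam.card : ℂ) - 1 + ∑ q ∈ (pairs N).filter fun q => q.1 ∈ lam ∧ q.2 ∈ lam, s q.1 q.2

/-- Membership in `Ω_I`: `Re e_λ(s) > 0` for every `λ ⊆ I` with `#λ > 1`. -/
def InOmega (I : Finset (Fin N)) (s : Fin N → Fin N → ℂ) : Prop :=
  ∀ lam ⊆ I, 1 < lam.card → 0 < (eexp lam s).re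


/-- The multivariate canonical partition function `𝒵_N(ℤ_p, s)` over `Fin N`-indexed tuples. -/
def ZNs (μ : Measure ℚ_[p]) [SigmaFinite μ] (X : Set ℚ_[p]) (N : ℕ)
    (s : Fin N → Fin N → ℂ) : ℂ :=
  ∫ x : Fin N → ℚ_[p], ∏ q ∈ pairs N, (‖x q.1 - x q.2‖ : ℂ) ^ s q.1 q.2
    ∂(Measure.pi fun _ => μ.restrict X)

/-- The ball `p^v ℤ_p = {x : |x| ≤ p^{-v}}` in `ℚ_p`. -/
def pvball (v : ℤ) : Set ℚ_[p] := {x | ‖x‖ ≤ (p : ℝ) ^ (-v)}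

/-- `G_N(q,β) = N! q^{(1/2)(N choose 2)β} F_N(log q, β)`. -/
def GN (N : ℕ) (β : ℂ) (q : ℝ) : ℂ :=
  (N.factorial : ℂ) * (q : ℂ) ^ ((N.choose 2 : ℂ) * β / 2) * F N (Real.log q) β

/-- `H_N(q,β)`, the efficient formula for `Z_N(ℙ¹(K),β)` as a function of `q`. -/
def HN (N : ℕ) (β : ℂ) (q : ℝ) : ℂ :=
  (N.factorial : ℂ) * ∑ k ∈ Finset.range (N + 1),
    Complex.cosh (((Real.log q : ℂ) / 2) * ((N : ℂ) + (N.choose 2 : ℂ) * β) *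
          (1 - 2 * (k : ℂ) / (N : ℂ))) /
        (2 * Complex.cosh ((Real.log q : ℂ) / 2)) ^ N *
      F (N - k) (Real.log q) β * F k (Real.log q) β

end

/-!
The reduction `ℙ¹(ℚ_p) → ℙ¹(𝔽_p)` and the `p`-adic digits encode a point of the projective line by
one letter out of `p + 1` followed by an infinite word in `p` letters. Two points lie at distance
`p⁻ᵐ`, where `m` is the length of the longest common prefix of their codes, so the prefixes of a
given length correspond to the balls of a given radius. The group `GL₂(ℤ_p)` permutes those balls
transitively, hence `ν` gives them all the same mass, and any invariant probability measure makes
the letters independent and uniform.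

Truncate the integrand to the tuples whose codes differ pairwise within the first `n + 1` letters.
Its integral is a finite mean. Sorting the tuples of a block `I` by the partition of `I` into equal
next letters turns this mean into a sum over set partitions; writing `C_I = p ^ e_I(s)`, the block
means satisfy `v_{n+1}(I) = C_I⁻¹ (v_n(I) + Σ_P (p - 1)_{#P - 1} Π_{B ∈ P} v_n(B))`, where `P` runs
through the partitions of `I` other than `{I}`. For the absolute values of the integrand, all terms
are nonnegative and the sum stays away from `0`, so the means are bounded if and only if `|C_I| > 1`
for every `I` with at least two elements; by Fatou's lemma this is the convergence criterion.

In that case `v_n(I)` tends to the solution of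
`V_I = (C_I - 1)⁻¹ Σ_P (p - 1)_{#P - 1} Π_{B ∈ P} V_B`.
Expanding all non-singleton blocks simultaneously, again and again, produces one term for each
reduced splitting chain. The root letter has `p + 1` values instead of `p`, which only changes the
factor of the block `[N]`.
-/

section Partitions

open Finset

variable {ι R : Type*} [DecidableEq ι] [CommSemiring R] {I : Finset ι}

theorem mem_parts_self_iff_eq_top (hI : I.Nonempty) {P : Finpartition I} :
    I ∈ P.parts ↔ P = ⊤ := by
  constructor
  · refine fun hP => top_le_iff.1 fun B hB => ⟨I, hP, ?_⟩
    exact (mem_singleton.1 (Finpartition.parts_top_subset I hB)).le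
  · rintro rfl
    obtain ⟨B, hB⟩ := (⊤ : Finpartition I).parts_nonempty hI.ne_empty
    have hBI := mem_singleton.1 (Finpartition.parts_top_subset I hB)
    rwa [hBI] at hB

theorem parts_top (hI : I.Nonempty) : (⊤ : Finpartition I).parts = {I} :=
  (Finpartition.parts_top_subset I).antisymm
    (singleton_subset_iff.2 ((mem_parts_self_iff_eq_top hI).2 rfl))

/-- The set partitions of `I` other than `{I}`. -/
def properPartitions (I : Finset ι) : Finset (Finpartition I) :=
  univ.filter fun P => I ∉ P.parts

theorem mem_properPartitions {P : Finpartition I} : P ∈ properPartitions I ↔ I ∉ P.parts := by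
  simp [properPartitions]

theorem ssubset_of_mem_properPartitions {P : Finpartition I} (hP : P ∈ properPartitions I)
    {B : Finset ι} (hB : B ∈ P.parts) : B ⊂ I :=
  (P.subset hB).ssubset_of_ne fun h => mem_properPartitions.1 hP (h ▸ hB)

theorem sum_finpartition_eq_add_sum_proper {M : Type*} [AddCommMonoid M] (hI : I.Nonempty)
    (f : Finpartition I → M) : ∑ P, f P = f ⊤ + ∑ P ∈ properPartitions I, f P := by
  have h : properPartitions I = univ.erase ⊤ := by
    ext P
    simp [mem_properPartitions, mem_parts_self_iff_eq_top hI]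
  rw [h, add_sum_erase _ _ (mem_univ _)]

variable {P Q : Finpartition I}

theorem parts_eq_biUnion_of_le (h : Q ≤ P) :
    Q.parts = P.parts.biUnion fun B => {C ∈ Q.parts | C ⊆ B} := by
  ext C
  simp only [mem_biUnion, mem_filter]
  exact ⟨fun hC => (h hC).imp fun B hB => ⟨hB.1, hC, hB.2⟩, fun ⟨_, _, hC, _⟩ => hC⟩

theorem block_eq_of_subset {B B' C : Finset ι} (hB : B ∈ P.parts) (hB' : B' ∈ P.parts)
    (hC : C.Nonempty) (hCB : C ⊆ B) (hCB' : C ⊆ B') : B = B' :=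
  hC.elim fun _ hi => P.eq_of_mem_parts hB hB' (hCB hi) (hCB' hi)

theorem prod_parts_eq_prod_prod_of_le {M : Type*} [CommMonoid M] (h : Q ≤ P)
    (f : Finset ι → M) :
    ∏ C ∈ Q.parts, f C = ∏ B ∈ P.parts, ∏ C ∈ Q.parts with C ⊆ B, f C := by
  conv_lhs => rw [parts_eq_biUnion_of_le h]
  refine prod_biUnion fun B hB B' hB' hne => disjoint_left.2 fun C hC hC' => hne ?_
  rw [mem_filter] at hC hC'
  exact block_eq_of_subset hB hB' (Q.nonempty_of_mem_parts hC.1) hC.2 hC'.2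

theorem parts_restrict_of_le (h : Q ≤ P) {B : Finset ι} (hB : B ∈ P.parts) :
    (Q.restrict (P.le hB)).parts = {C ∈ Q.parts | C ⊆ B} := by
  ext C
  simp only [Finpartition.restrict, mem_erase, mem_image, mem_filter, bot_eq_empty, ne_eq,
    ← nonempty_iff_ne_empty, inf_eq_inter]
  constructor
  · rintro ⟨hne, C', hC', rfl⟩
    obtain ⟨B', hB', hCB'⟩ := h hC'
    have hBB' := block_eq_of_subset hB hB' hne inter_subset_right
      (inter_subset_left.trans hCB')
    have hCB : C' ⊆ B := hBB' ▸ hCB'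
    rw [inter_eq_left.2 hCB]
    exact ⟨hC', hCB⟩
  · exact fun ⟨hC, hCB⟩ => ⟨Q.nonempty_of_mem_parts hC, C, hC, inter_eq_left.2 hCB⟩

theorem bind_le (F : ∀ B ∈ P.parts, Finpartition B) : P.bind F ≤ P := fun C hC => by
  obtain ⟨B, hB, hCB⟩ := Finpartition.mem_bind.1 hC
  exact ⟨B, hB, (F B hB).le hCB⟩

theorem filter_subset_parts_bind (F : ∀ B ∈ P.parts, Finpartition B) {B : Finset ι}
    (hB : B ∈ P.parts) : {C ∈ (P.bind F).parts | C ⊆ B} = (F B hB).parts := by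
  ext C
  rw [mem_filter, Finpartition.mem_bind]
  constructor
  · rintro ⟨⟨B', hB', hC⟩, hCB⟩
    obtain rfl := block_eq_of_subset hB' hB ((F B' hB').nonempty_of_mem_parts hC)
      ((F B' hB').le hC) hCB
    exact hC
  · exact fun hC => ⟨⟨B, hB, hC⟩, (F B hB).le hC⟩

theorem bind_restrict_of_le (h : Q ≤ P) : (P.bind fun _ hB => Q.restrict (P.le hB)) = Q := by
  ext C
  rw [Finpartition.mem_bind]
  constructor
  · rintro ⟨B, hB, hC⟩
    rw [parts_restrict_of_le h hB, mem_filter] at hC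
    exact hC.1
  · intro hC
    obtain ⟨B, hB, hCB⟩ := h hC
    exact ⟨B, hB, by rw [parts_restrict_of_le h hB, mem_filter]; exact ⟨hC, hCB⟩⟩

/-- `Q` arises from `P` by splitting every non-singleton block: consecutive partitions of a
reduced splitting chain are related in this way. -/
def IsSplitting (P Q : Finpartition I) : Prop :=
  Q ≤ P ∧ ∀ B ∈ P.parts, 1 < #B → B ∉ Q.parts

open scoped Classical in
/-- The product of the weights `w B d` over the non-singleton blocks `B` of `P`, where `d` is the
number of blocks of `Q` into which `B` is divided. -/
noncomputable def splittingWeight (w : Finset ι → ℕ → R) (P Q : Finpartition I) : R :=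
  ∏ B ∈ P.parts with 1 < #B, w B #{C ∈ Q.parts | C ⊆ B}

open scoped Classical in
theorem sum_isSplitting_eq_sum_pi (P : Finpartition I) (f : Finpartition I → R) :
    ∑ Q with IsSplitting P Q, f Q =
      ∑ F ∈ P.parts.pi fun B => {T : Finpartition B | 1 < #B → B ∉ T.parts}, f (P.bind F) := by
  refine sum_bij' (fun Q _ B hB => Q.restrict (P.le hB)) (fun F _ => P.bind F) ?_ ?_ ?_ ?_ ?_
  · intro Q hQ
    obtain ⟨hQP, hQ⟩ := (mem_filter.1 hQ).2
    simp only [mem_pi, mem_filter, mem_univ, true_and]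
    intro B hB hB1
    rw [parts_restrict_of_le hQP hB, mem_filter]
    exact fun h => hQ B hB hB1 h.1
  · intro F hF
    simp only [mem_pi, mem_filter, mem_univ, true_and] at hF ⊢
    refine ⟨bind_le F, fun B hB hB1 h => hF B hB hB1 ?_⟩
    rw [← filter_subset_parts_bind F hB, mem_filter]
    exact ⟨h, Subset.rfl⟩
  · exact fun Q hQ => bind_restrict_of_le (mem_filter.1 hQ).2.1
  · intro F _
    funext B hB
    refine Finpartition.ext ?_
    rw [parts_restrict_of_le (bind_le F) hB, filter_subset_parts_bind F hB]
  · intro Q hQ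
    rw [bind_restrict_of_le (mem_filter.1 hQ).2.1]

theorem eq_sum_finpartition_of_recursion (w : Finset ι → ℕ → R) (V : Finset ι → R)
    (hV : ∀ B, 1 < #B → V B = ∑ T ∈ properPartitions B, w B #T.parts * ∏ C ∈ T.parts, V C)
    {B : Finset ι} (hB : B.Nonempty) :
    V B = ∑ T : Finpartition B with 1 < #B → B ∉ T.parts,
      (if 1 < #B then w B #T.parts else 1) * ∏ C ∈ T.parts, V C := by
  obtain hB1 | hB1 := lt_or_ge 1 #B
  · simp only [hB1, forall_const, if_true]
    exact hV B hB1
  · obtain ⟨i, rfl⟩ := card_eq_one.1 (hB1.antisymm hB.card_pos)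
    let _ := (Finset.isAtom_singleton i).uniqueFinpartition (P := ⊤)
    have hun : (univ : Finset (Finpartition ({i} : Finset ι))) = {⊤} := by
      exact eq_singleton_iff_unique_mem.2 ⟨mem_univ _, fun T _ => Subsingleton.elim T ⊤⟩
    simp only [card_singleton, lt_irrefl, false_imp_iff, filter_true, if_false, one_mul]
    rw [hun, sum_singleton, parts_top hB, prod_singleton]

open scoped Classical in
theorem prod_parts_eq_sum_isSplitting (w : Finset ι → ℕ → R) (V : Finset ι → R)
    (hV : ∀ B, 1 < #B → V B = ∑ T ∈ properPartitions B, w B #T.parts * ∏ C ∈ T.parts, V C)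
    (P : Finpartition I) :
    ∏ B ∈ P.parts, V B =
      ∑ Q with IsSplitting P Q, splittingWeight w P Q * ∏ C ∈ Q.parts, V C := by
  rw [sum_isSplitting_eq_sum_pi, prod_congr rfl fun B hB =>
    eq_sum_finpartition_of_recursion w V hV (P.nonempty_of_mem_parts hB), prod_sum]
  refine sum_congr rfl fun F _ => ?_
  rw [splittingWeight, prod_filter, prod_parts_eq_prod_prod_of_le (bind_le F) V,
    ← prod_mul_distrib, ← prod_attach P.parts]
  refine prod_congr rfl fun B _ => ?_
  rw [filter_subset_parts_bind F B.2]

end Partitions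

section Walks

open Finset

variable {α R : Type*} [Fintype α] [DecidableEq α] [CommSemiring R]

theorem eq_sum_walk {W : α → α → R} {U : α → R} (h : ∀ a, U a = ∑ b, W a b * U b) (n : ℕ)
    (a : α) : U a = ∑ f : Fin (n + 1) → α with f 0 = a,
      (∏ i : Fin n, W (f i.castSucc) (f i.succ)) * U (f (Fin.last n)) := by
  induction n generalizing a with
  | zero =>
    rw [sum_filter, ← (Equiv.funUnique (Fin 1) α).symm.sum_comp]
    simp
  | succ n ih =>
    rw [sum_filter, ← (Fin.consEquiv fun _ : Fin (n + 2) => α).sum_comp,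
      Fintype.sum_prod_type_right, h a, sum_congr rfl fun b _ => congrArg (W a b * ·) (ih b)]
    simp only [mul_sum, sum_filter]
    rw [sum_comm]
    refine sum_congr rfl fun g _ => ?_
    simp only [Fin.consEquiv_apply, Fin.cons_zero, mul_ite, mul_zero, sum_ite_eq, sum_ite_eq',
      mem_univ, if_true]
    rw [Fin.prod_univ_succ, mul_assoc]
    simp only [Fin.castSucc_zero, ← Fin.succ_castSucc, ← Fin.succ_last, Fin.cons_zero,
      Fin.cons_succ]

open scoped Classical in
theorem eq_sum_walk_of_rel {r : α → α → Prop} {W : α → α → R} {U : α → R}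
    (h : ∀ a, U a = ∑ b with r a b, W a b * U b) (n : ℕ) (a : α) :
    U a = ∑ f : Fin (n + 1) → α with f 0 = a ∧ ∀ i : Fin n, r (f i.castSucc) (f i.succ),
      (∏ i : Fin n, W (f i.castSucc) (f i.succ)) * U (f (Fin.last n)) := by
  have h' : ∀ a, U a = ∑ b, (if r a b then W a b else 0) * U b := fun a => by
    simp only [ite_mul, zero_mul, ← sum_filter, ← h a]
  rw [eq_sum_walk h' n a, ← filter_filter, sum_filter (p := fun f => ∀ i : Fin n, _)]
  refine sum_congr rfl fun f _ => ?_
  simp only [prod_ite_zero, mem_univ, forall_const, ite_mul, zero_mul]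

end Walks

section SplittingSequences

variable {ι : Type*} [DecidableEq ι] {I : Finset ι} {F : ℕ → Finpartition I}

theorem isSplitting_bot (P : Finpartition I) : IsSplitting P ⊥ := by
  refine ⟨bot_le, fun B _ hB1 hB => ?_⟩
  obtain ⟨i, -, rfl⟩ := Finpartition.mem_bot_iff.1 hB
  simp at hB1

theorem eq_bot_of_forall_card_le_one {P : Finpartition I} (h : ∀ B ∈ P.parts, B.card ≤ 1) :
    P = ⊥ := by
  refine le_bot_iff.1 fun B hB => ⟨B, ?_, le_rfl⟩
  obtain ⟨i, rfl⟩ := Finset.card_eq_one.1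
    ((h B hB).antisymm (P.nonempty_of_mem_parts hB).card_pos)
  exact Finpartition.mem_bot_iff.2 ⟨i, P.subset hB (Finset.mem_singleton_self i), rfl⟩

theorem mem_parts_of_antitone (hF : Antitone F) {k l m : ℕ} (hkl : k ≤ l) (hlm : l ≤ m)
    {B : Finset ι} (hk : B ∈ (F k).parts) (hm : B ∈ (F m).parts) : B ∈ (F l).parts := by
  obtain ⟨C, hC, hBC⟩ := hF hlm hm
  obtain ⟨D, hD, hCD⟩ := hF hkl hC
  obtain rfl := block_eq_of_subset hk hD ((F k).nonempty_of_mem_parts hk) subset_rfl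
    (hBC.trans hCD)
  exact Finset.Subset.antisymm hBC hCD ▸ hC

theorem antitone_of_isSplitting (hF : ∀ l, IsSplitting (F l) (F (l + 1))) : Antitone F :=
  antitone_nat_of_succ_le fun l => (hF l).1

theorem level_unique_of_isSplitting (hF : ∀ l, IsSplitting (F l) (F (l + 1))) {B : Finset ι}
    (hB : 1 < B.card) {l m : ℕ} (hl : B ∈ (F l).parts) (hm : B ∈ (F m).parts) : l = m := by
  wlog hlm : l < m generalizing l m
  · obtain h | h := (not_lt.1 hlm).eq_or_lt
    · exact h.symm
    · exact (this hm hl h).symm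
  · exact absurd (mem_parts_of_antitone (antitone_of_isSplitting hF) l.le_succ hlm hl hm)
      ((hF l).2 B hl hB)

theorem card_add_le_of_isSplitting (hF : ∀ l, IsSplitting (F l) (F (l + 1))) {l : ℕ}
    {B : Finset ι} (hl : B ∈ (F l).parts) (hB : 1 < B.card) : B.card + l ≤ I.card := by
  induction l generalizing B with
  | zero => exact Finset.card_le_card ((F 0).subset hl)
  | succ l ih =>
    obtain ⟨C, hC, hBC⟩ := (hF l).1 hl
    have hC1 : 1 < C.card := hB.trans_le (Finset.card_le_card hBC)
    have hne : B ≠ C := fun h => (hF l).2 C hC hC1 (h ▸ hl)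
    have := Finset.card_lt_card (hBC.ssubset_of_ne hne)
    have := ih hC hC1
    omega

theorem eq_bot_of_isSplitting (hF : ∀ l, IsSplitting (F l) (F (l + 1))) {l : ℕ}
    (hl : I.card ≤ l) : F l = ⊥ :=
  eq_bot_of_forall_card_le_one fun B hB => not_lt.1 fun hB1 => by
    have := card_add_le_of_isSplitting hF hB hB1
    omega

end SplittingSequences

section SplittingChains

open Finset

variable {N : ℕ} (S : SplChain N univ)

namespace SplChain

/-- The `l`-th partition of a splitting chain, extended past the last level by the partition into
singletons. -/
noncomputable def partition (l : ℕ) : Finpartition (univ : Finset (Fin N)) :=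
  if h : l ≤ S.L then
    Finpartition.ofExistsUnique (S.Λ l) (S.subset_mem l h) (S.cover l h)
      fun h0 => (S.nonempty_mem l h ∅ h0).ne_empty rfl
  else ⊥

variable {S}

theorem parts_partition {l : ℕ} (h : l ≤ S.L) : (S.partition l).parts = S.Λ l := by
  rw [partition, dif_pos h, Finpartition.ofExistsUnique_parts]

theorem partition_eq_bot_of_le {l : ℕ} (h : S.L ≤ l) : S.partition l = ⊥ := by
  obtain rfl | h := h.eq_or_lt
  · refine Finpartition.ext ?_
    ext B
    rw [parts_partition le_rfl, S.last, Finpartition.mem_bot_iff, mem_image]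
  · rw [partition, dif_neg h.not_ge]

theorem partition_zero [NeZero N] : S.partition 0 = ⊤ := by
  rw [← mem_parts_self_iff_eq_top univ_nonempty, parts_partition (Nat.zero_le _), S.first]
  exact mem_singleton_self _

theorem partition_succ_lt {l : ℕ} (h : l < S.L) : S.partition (l + 1) < S.partition l := by
  refine lt_of_le_of_ne (fun B hB => ?_) fun heq => S.strict l h ?_
  · rw [parts_partition h] at hB
    rw [parts_partition h.le]
    exact S.refines l h B hB
  · rw [← parts_partition h, heq, parts_partition h.le]

theorem partition_antitone : Antitone S.partition := by
  refine antitone_nat_of_succ_le fun l => ?_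
  obtain h | h := lt_or_ge l S.L
  · exact (partition_succ_lt h).le
  · rw [partition_eq_bot_of_le h, partition_eq_bot_of_le (h.trans l.le_succ)]

theorem partition_eq_bot_iff {l : ℕ} : S.partition l = ⊥ ↔ S.L ≤ l :=
  ⟨fun h => not_lt.1 fun hl => not_lt_bot (h ▸ partition_succ_lt hl), partition_eq_bot_of_le⟩

theorem partition_injective :
    Function.Injective (partition : SplChain N univ → ℕ → Finpartition univ) := by
  intro S T h
  have hL : S.L = T.L := eq_of_forall_ge_iff fun l => by
    rw [← partition_eq_bot_iff, ← partition_eq_bot_iff, h]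
  have hΛ : S.Λ = T.Λ := funext fun l => by
    obtain hl | hl := le_or_gt l S.L
    · rw [← parts_partition hl, ← parts_partition (hL ▸ hl), h]
    · rw [S.trailing l hl, T.trailing l (hL ▸ hl)]
  cases S
  cases T
  congr

theorem mem_branches {B : Finset (Fin N)} :
    B ∈ S.branches ↔ 1 < #B ∧ ∃ l < S.L, B ∈ (S.partition l).parts := by
  have hlast : B ∈ S.Λ S.L ↔ #B = 1 := by
    simp [S.last, card_eq_one, eq_comm]
  simp only [branches, mem_sdiff, mem_biUnion, mem_range, hlast]
  constructor
  · rintro ⟨⟨l, hl, hB⟩, hB1⟩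
    have := (S.nonempty_mem l hl.le B hB).card_pos
    exact ⟨by omega, l, hl, by rwa [parts_partition hl.le]⟩
  · rintro ⟨hB1, l, hl, hB⟩
    exact ⟨⟨l, hl, by rwa [← parts_partition hl.le]⟩, hB1.ne'⟩

theorem lt_of_mem_partition {l : ℕ} {B : Finset (Fin N)} (hB : B ∈ (S.partition l).parts)
    (hB1 : 1 < #B) : l < S.L := by
  refine not_le.1 fun h => ?_
  rw [partition_eq_bot_of_le h] at hB
  obtain ⟨i, -, rfl⟩ := Finpartition.mem_bot_iff.1 hB
  simp at hB1

theorem univ_mem_branches (S : SplChain N univ) (hN : 1 < N) : univ ∈ S.branches := by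
  have : NeZero N := ⟨(zero_lt_one.trans hN).ne'⟩
  have hroot : univ ∈ (S.partition 0).parts := by
    rw [partition_zero, parts_top univ_nonempty, mem_singleton]
  have hcard : 1 < #(univ : Finset (Fin N)) := by rwa [card_fin]
  exact mem_branches.2 ⟨hcard, 0, lt_of_mem_partition hroot hcard, hroot⟩

theorem Reduced.isSplitting (hS : S.Reduced) (l : ℕ) :
    IsSplitting (S.partition l) (S.partition (l + 1)) := by
  refine ⟨partition_antitone l.le_succ, fun B hB hB1 hB' => ?_⟩
  have hl := lt_of_mem_partition hB hB1
  have hbr : B ∈ S.branches := mem_branches.2 ⟨hB1, l, hl, hB⟩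
  rw [parts_partition hl.le] at hB
  rw [parts_partition hl] at hB'
  exact l.succ_ne_self (((hS B hbr _ hl).1 hB').trans ((hS B hbr l hl.le).1 hB).symm)

theorem depth_eq_of_isSplitting (hS : ∀ l, IsSplitting (S.partition l) (S.partition (l + 1)))
    {l : ℕ} {B : Finset (Fin N)} (hB : B ∈ (S.partition l).parts) (hB1 : 1 < #B) :
    S.depth B = l := by
  have hl := (lt_of_mem_partition hB hB1).le
  have hfil : {m ∈ range (S.L + 1) | B ∈ S.Λ m} = {l} := by
    ext m
    rw [mem_filter, mem_range, mem_singleton, Nat.lt_succ_iff]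
    constructor
    · rintro ⟨hm, hBm⟩
      exact level_unique_of_isSplitting hS hB1 (by rwa [parts_partition hm]) hB
    · rintro rfl
      exact ⟨hl, by rwa [← parts_partition hl]⟩
  rw [depth, hfil, sup_singleton, id]

theorem reduced_of_isSplitting (hS : ∀ l, IsSplitting (S.partition l) (S.partition (l + 1))) :
    S.Reduced := by
  intro B hB l hl
  obtain ⟨hB1, m, -, hBm⟩ := mem_branches.1 hB
  rw [depth_eq_of_isSplitting hS hBm hB1, ← parts_partition hl]
  exact ⟨fun h => level_unique_of_isSplitting hS hB1 h hBm, fun h => h ▸ hBm⟩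

theorem Reduced.degree_eq (hS : S.Reduced) {l : ℕ} {B : Finset (Fin N)}
    (hB : B ∈ (S.partition l).parts) (hB1 : 1 < #B) :
    S.degree B = #{C ∈ (S.partition (l + 1)).parts | C ⊆ B} := by
  rw [degree, depth_eq_of_isSplitting hS.isSplitting hB hB1,
    parts_partition (lt_of_mem_partition hB hB1)]

theorem Reduced.prod_branches {R : Type*} [CommSemiring R] (hS : S.Reduced)
    (w : Finset (Fin N) → ℕ → R) :
    ∏ B ∈ S.branches, w B (S.degree B) =
      ∏ l : Fin N, splittingWeight w (S.partition l) (S.partition (l + 1)) := by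
  have hbr : S.branches =
      (range N).biUnion fun l => {B ∈ (S.partition l).parts | 1 < #B} := by
    ext B
    simp only [mem_branches, mem_biUnion, mem_filter, mem_range]
    constructor
    · rintro ⟨hB1, l, -, hB⟩
      have := card_add_le_of_isSplitting hS.isSplitting hB hB1
      rw [card_univ, Fintype.card_fin] at this
      exact ⟨l, by omega, hB, hB1⟩
    · rintro ⟨l, -, hB, hB1⟩
      exact ⟨hB1, l, lt_of_mem_partition hB hB1, hB⟩
  have hdisj : (range N : Set ℕ).PairwiseDisjoint
      fun l => {B ∈ (S.partition l).parts | 1 < #B} := fun l _ m _ hlm =>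
    disjoint_left.2 fun B hl hm => by
      rw [mem_filter] at hl hm
      exact hlm (level_unique_of_isSplitting hS.isSplitting hl.2 hl.1 hm.1)
  rw [hbr, prod_biUnion hdisj, ← Fin.prod_univ_eq_prod_range
    (fun l => ∏ B ∈ (S.partition l).parts with 1 < #B, w B (S.degree B))]
  refine prod_congr rfl fun l _ => prod_congr rfl fun B hB => ?_
  rw [mem_filter] at hB
  rw [hS.degree_eq hB.1 hB.2]

open scoped Classical in
theorem exists_partition_eq [NeZero N] {F : ℕ → Finpartition (univ : Finset (Fin N))}
    (h0 : F 0 = ⊤) (hF : ∀ l, IsSplitting (F l) (F (l + 1))) :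
    ∃ S : SplChain N univ, S.partition = F := by
  have hbot : ∃ l, F l = ⊥ := ⟨_, eq_bot_of_isSplitting hF le_rfl⟩
  have hΛ : ∀ {l}, l ≤ Nat.find hbot →
      (if l ≤ Nat.find hbot then (F l).parts else ∅) = (F l).parts := fun h => if_pos h
  let S : SplChain N univ :=
    { L := Nat.find hbot
      Λ := fun l => if l ≤ Nat.find hbot then (F l).parts else ∅
      nonempty_mem := fun l hl B hB => (F l).nonempty_of_mem_parts (hΛ hl ▸ hB)
      subset_mem := fun _ _ B _ => subset_univ B
      cover := fun l hl i hi => by simpa only [hΛ hl] using (F l).existsUnique_mem hi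
      first := by rw [hΛ (Nat.zero_le _), h0, parts_top univ_nonempty]
      last := by
        ext B
        rw [hΛ le_rfl, Nat.find_spec hbot, Finpartition.mem_bot_iff, mem_image]
      refines := fun l hl B hB => by
        simp only [hΛ hl.le, hΛ hl] at hB ⊢
        exact (hF l).1 hB
      strict := fun l hl h => Nat.find_min hbot hl <| eq_bot_of_forall_card_le_one
        fun B hB => not_lt.1 fun hB1 => (hF l).2 B hB hB1 <| by
          rw [hΛ hl.le, hΛ hl] at h
          exact h ▸ hB
      trailing := fun l hl => if_neg hl.not_ge }
  refine ⟨S, funext fun l => ?_⟩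
  obtain hl | hl := le_or_gt l (Nat.find hbot)
  · exact Finpartition.ext ((parts_partition (S := S) hl).trans (hΛ hl))
  · rw [partition_eq_bot_of_le (S := S) hl.le]
    exact (le_bot_iff.1 (Nat.find_spec hbot ▸ antitone_of_isSplitting hF hl.le)).symm

end SplChain

open SplChain in
open scoped Classical in
theorem bijOn_partition_walk [NeZero N] :
    Set.BijOn (fun (S : SplChain N univ) (l : Fin (N + 1)) => S.partition l) {S | S.Reduced}
      (({f | f 0 = ⊤ ∧ ∀ i : Fin N, IsSplitting (f i.castSucc) (f i.succ)} :
        Finset (Fin (N + 1) → Finpartition (univ : Finset (Fin N)))) : Set _) := by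
  simp only [coe_filter, mem_univ, true_and]
  refine ⟨fun S hS => ⟨partition_zero, fun i => hS.isSplitting i⟩, fun S hS T hT h => ?_,
    fun f ⟨hf0, hf⟩ => ?_⟩
  · refine partition_injective (funext fun l => ?_)
    obtain hl | hl := le_or_gt l N
    · exact congrFun h ⟨l, Nat.lt_succ_of_le hl⟩
    · have hN : #(univ : Finset (Fin N)) ≤ l := by simpa using hl.le
      rw [eq_bot_of_isSplitting hS.isSplitting hN, eq_bot_of_isSplitting hT.isSplitting hN]
  · let F : ℕ → Finpartition (univ : Finset (Fin N)) := fun l =>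
      if h : l < N + 1 then f ⟨l, h⟩ else ⊥
    have hF : ∀ l, IsSplitting (F l) (F (l + 1)) := fun l => by
      obtain hl | hl := lt_or_ge l N
      · simp only [F, dif_pos (Nat.lt_succ_of_lt hl), dif_pos (Nat.succ_lt_succ hl)]
        exact hf ⟨l, hl⟩
      · simpa only [F, dif_neg (Nat.succ_le_succ hl).not_gt] using isSplitting_bot _
    obtain ⟨S, hS⟩ := exists_partition_eq (F := F) (by simpa [F] using hf0) hF
    refine ⟨S, reduced_of_isSplitting (hS ▸ hF), funext fun l => ?_⟩
    simp only [hS, F, dif_pos l.2]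

theorem eq_finsum_reduced_splChain {R : Type*} [CommSemiring R] [NeZero N]
    (w : Finset (Fin N) → ℕ → R) (V : Finset (Fin N) → R) (hV1 : ∀ i, V {i} = 1)
    (hV : ∀ B, 1 < #B → V B = ∑ T ∈ properPartitions B, w B #T.parts * ∏ C ∈ T.parts, V C) :
    V univ = ∑ᶠ S ∈ {S : SplChain N univ | S.Reduced}, ∏ B ∈ S.branches, w B (S.degree B) := by
  have hwalk := eq_sum_walk_of_rel
    (U := fun P : Finpartition (univ : Finset (Fin N)) => ∏ B ∈ P.parts, V B)
    (prod_parts_eq_sum_isSplitting (I := univ) w V hV) N ⊤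
  simp only [parts_top univ_nonempty, prod_singleton] at hwalk
  rw [hwalk, ← finsum_mem_coe_finset]
  refine (finsum_mem_eq_of_bijOn _ bijOn_partition_walk fun S hS => ?_).symm
  have hbot : S.partition N = ⊥ := eq_bot_of_isSplitting (SplChain.Reduced.isSplitting hS) (by simp)
  simp [SplChain.Reduced.prod_branches hS w, hbot, hV1]

theorem sum_properPartitions_eq_finsum_reduced_splChain {R : Type*} [CommSemiring R] (hN : 1 < N)
    (w₀ : ℕ → R) (w : Finset (Fin N) → ℕ → R) (V : Finset (Fin N) → R) (hV1 : ∀ i, V {i} = 1)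
    (hV : ∀ B, 1 < #B → V B = ∑ T ∈ properPartitions B, w B #T.parts * ∏ C ∈ T.parts, V C) :
    ∑ T ∈ properPartitions (univ : Finset (Fin N)), w₀ #T.parts * ∏ C ∈ T.parts, V C =
      ∑ᶠ S ∈ {S : SplChain N univ | S.Reduced},
        w₀ (S.degree univ) * ∏ B ∈ S.branches.erase univ, w B (S.degree B) := by
  have : NeZero N := ⟨(zero_lt_one.trans hN).ne'⟩
  have hcard : 1 < #(univ : Finset (Fin N)) := by rwa [card_fin]
  set total := ∑ T ∈ properPartitions (univ : Finset (Fin N)), w₀ #T.parts * ∏ C ∈ T.parts, V C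
    with htotal
  let W := Function.update w univ w₀
  let U := Function.update V univ total
  have hU {B : Finset (Fin N)} {T : Finpartition B} (hT : T ∈ properPartitions B) :
      ∏ C ∈ T.parts, U C = ∏ C ∈ T.parts, V C :=
    prod_congr rfl fun C hC => Function.update_of_ne
      ((ssubset_of_mem_properPartitions hT hC).trans_subset (subset_univ B)).ne _ _
  have hU₁ (i : Fin N) : U {i} = 1 := by
    refine (Function.update_of_ne (fun h => ?_) _ _).trans (hV1 i)
    rw [← h, card_singleton] at hcard
    exact hcard.false
  have hU' (B : Finset (Fin N)) (hB : 1 < #B) :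
      U B = ∑ T ∈ properPartitions B, W B #T.parts * ∏ C ∈ T.parts, U C := by
    rw [sum_congr rfl fun T hT => congrArg (W B #T.parts * ·) (hU hT)]
    obtain rfl | hne := eq_or_ne B univ
    · simp only [U, W, Function.update_self, htotal]
    · simp only [U, W, Function.update_of_ne hne, hV B hB]
  have hU₀ : U univ = total := Function.update_self ..
  rw [← hU₀, eq_finsum_reduced_splChain W U hU₁ hU']
  refine finsum_mem_congr rfl fun S _ => ?_
  rw [← mul_prod_erase _ _ (S.univ_mem_branches hN)]
  refine congrArg₂ _ (by simp only [W, Function.update_self]) (prod_congr rfl fun B hB => ?_)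
  simp only [W, Function.update_of_ne (ne_of_mem_erase hB)]

end SplittingChains

section Colourings

open Finset

variable {ι R : Type*} [DecidableEq ι] {I : Finset ι}

theorem finpartition_le_iff_part_eq {P Q : Finpartition I} :
    P ≤ Q ↔ ∀ i ∈ I, ∀ j ∈ I, P.part i = P.part j → Q.part i = Q.part j := by
  constructor
  · intro h i hi j hj hij
    obtain ⟨C, hC, hPC⟩ := h (P.part_mem.2 hi)
    rw [Q.part_eq_of_mem hC (hPC (P.mem_part_self.2 hi)),
      Q.part_eq_of_mem hC (hPC (hij ▸ P.mem_part_self.2 hj))]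
  · intro h B hB
    obtain ⟨i, hiB⟩ := P.nonempty_of_mem_parts hB
    have hi := P.subset hB hiB
    refine ⟨Q.part i, Q.part_mem.2 hi, fun j hjB => ?_⟩
    have hj := P.subset hB hjB
    rw [Q.mem_part_iff_part_eq_part hj hi]
    exact h j hj i hi ((P.part_eq_of_mem hB hjB).trans (P.part_eq_of_mem hB hiB).symm)

/-- The colouring that gives every block of `P` its colour under `g`, and agrees with `h`
off `I`. -/
def colouring (P : Finpartition I) (g : P.parts → R) (h : {i // i ∉ I} → R) (i : ι) : R :=
  if hi : i ∈ I then g ⟨P.part i, P.part_mem.2 hi⟩ else h ⟨i, hi⟩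

theorem colouring_of_mem {P : Finpartition I} (g : P.parts → R) (h : {i // i ∉ I} → R) {i : ι}
    (B : P.parts) (hi : i ∈ B.1) : colouring P g h i = g B := by
  rw [colouring, dif_pos (P.subset B.2 hi)]
  exact congrArg g (Subtype.ext (P.part_eq_of_mem B.2 hi))

theorem colouring_injective (P : Finpartition I) : Function.Injective
    fun gh : (P.parts ↪ R) × ({i // i ∉ I} → R) => colouring P gh.1 gh.2 := by
  rintro ⟨g, h⟩ ⟨g', h'⟩ heq
  refine Prod.ext (Function.Embedding.ext fun B => ?_) (funext fun i => ?_)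
  · obtain ⟨i, hi⟩ := P.nonempty_of_mem_parts B.2
    simpa only [colouring_of_mem _ _ B hi] using congrFun heq i
  · simpa only [colouring, dif_neg i.2] using congrFun heq i

variable [DecidableEq R]

/-- The partition of `I` into the colour classes of `c`. -/
def kernelPartition (c : ι → R) (I : Finset ι) : Finpartition I :=
  letI : DecidableRel (Setoid.ker c).r := fun i j => decEq (c i) (c j)
  Finpartition.ofSetSetoid (Setoid.ker c) I

theorem part_kernelPartition_eq_iff (c : ι → R) {i j : ι} (hi : i ∈ I) (hj : j ∈ I) :
    (kernelPartition c I).part i = (kernelPartition c I).part j ↔ c i = c j := by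
  let _ : DecidableRel (Setoid.ker c).r := fun i j => decEq (c i) (c j)
  rw [← Finpartition.mem_part_iff_part_eq_part _ hi hj, kernelPartition,
    Finpartition.mem_part_ofSetSetoid_iff_rel]
  exact ⟨fun h => h.2.2.symm, fun h => ⟨hj, hi, h.symm⟩⟩

theorem kernelPartition_eq_iff {c : ι → R} {P : Finpartition I} :
    kernelPartition c I = P ↔ ∀ i ∈ I, ∀ j ∈ I, (c i = c j ↔ P.part i = P.part j) := by
  rw [le_antisymm_iff, finpartition_le_iff_part_eq, finpartition_le_iff_part_eq]
  constructor
  · rintro ⟨h₁, h₂⟩ i hi j hj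
    rw [← part_kernelPartition_eq_iff c hi hj]
    exact ⟨h₁ i hi j hj, h₂ i hi j hj⟩
  · intro h
    exact ⟨fun i hi j hj hij => (h i hi j hj).1 ((part_kernelPartition_eq_iff c hi hj).1 hij),
      fun i hi j hj hij => (part_kernelPartition_eq_iff c hi hj).2 ((h i hi j hj).2 hij)⟩

theorem kernelPartition_colouring (P : Finpartition I) (g : P.parts ↪ R) (h : {i // i ∉ I} → R) :
    kernelPartition (colouring P g h) I = P := by
  refine kernelPartition_eq_iff.2 fun i hi j hj => ?_
  rw [colouring, colouring, dif_pos hi, dif_pos hj, g.injective.eq_iff, Subtype.mk.injEq]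

theorem exists_colouring_eq {c : ι → R} {P : Finpartition I} (hc : kernelPartition c I = P) :
    ∃ (g : P.parts ↪ R) (h : {i // i ∉ I} → R), colouring P g h = c := by
  rw [kernelPartition_eq_iff] at hc
  choose r hr using fun B : P.parts => P.nonempty_of_mem_parts B.2
  have hrI : ∀ B, r B ∈ I := fun B => P.subset B.2 (hr B)
  have hpart : ∀ B, P.part (r B) = B := fun B => P.part_eq_of_mem B.2 (hr B)
  refine ⟨⟨fun B => c (r B), fun B C hBC => Subtype.ext ?_⟩, fun i => c i, funext fun i => ?_⟩
  · rw [← hpart B, ← hpart C]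
    exact (hc _ (hrI B) _ (hrI C)).1 hBC
  · by_cases hi : i ∈ I
    · rw [colouring_of_mem _ _ ⟨P.part i, P.part_mem.2 hi⟩ (P.mem_part_self.2 hi)]
      exact (hc _ (hrI _) _ hi).2 (hpart _)
    · simp only [colouring, dif_neg hi]

theorem card_kernelPartition_eq [Fintype ι] [Fintype R] (P : Finpartition I) :
    #{c : ι → R | kernelPartition c I = P} =
      (Fintype.card R).descFactorial #P.parts * Fintype.card R ^ (Fintype.card ι - #I) := by
  have himage : ({c : ι → R | kernelPartition c I = P} : Finset (ι → R)) =
      univ.image fun gh : (P.parts ↪ R) × ({i // i ∉ I} → R) => colouring P gh.1 gh.2 := by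
    ext c
    simp only [mem_filter, mem_univ, true_and, mem_image, Prod.exists]
    refine ⟨exists_colouring_eq, ?_⟩
    rintro ⟨g, h, rfl⟩
    exact kernelPartition_colouring P g h
  rw [himage, card_image_of_injective _ (colouring_injective P), card_univ, Fintype.card_prod,
    Fintype.card_embedding_eq, Fintype.card_fun, Fintype.card_coe, Fintype.card_subtype_compl,
    Fintype.card_coe]

end Colourings

section Independence

open Finset
open scoped BigOperators

variable {ι X K : Type*} [Fintype ι] [DecidableEq ι] [Fintype X] [Field K] [CharZero K]

theorem expect_mul_of_dependsOn (A : Finset ι) {f g : (ι → X) → K} (hf : DependsOn f A)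
    (hg : DependsOn g (Aᶜ : Finset ι)) : 𝔼 x, f x * g x = (𝔼 x, f x) * 𝔼 x, g x := by
  have hswap : 𝔼 z : (ι → X) × (ι → X), f z.1 * g z.2 =
      𝔼 z : (ι → X) × (ι → X), f z.1 * g z.1 := by
    refine Fintype.expect_bijective
      (fun z => (A.piecewise z.1 z.2, A.piecewise z.2 z.1))
      (Function.Involutive.bijective fun z => ?_) _ _ fun z => ?_
    · refine Prod.ext (funext fun i => ?_) (funext fun i => ?_) <;>
        by_cases hi : i ∈ A <;> simp [hi]
    · rw [@hf z.1 (A.piecewise z.1 z.2) fun i hi => by simp [mem_coe.1 hi],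
        @hg z.2 (A.piecewise z.1 z.2) fun i hi => by simp [mem_compl.1 (mem_coe.1 hi)]]
  cases isEmpty_or_nonempty (ι → X)
  · simp
  · rw [Fintype.expect_mul_expect, ← expect_product', univ_product_univ]
    rw [hswap, ← univ_product_univ, expect_product]
    simp only [Fintype.expect_const]

theorem expect_prod_of_dependsOn [Nonempty X] {𝓑 : Finset (Finset ι)}
    (h𝓑 : (𝓑 : Set (Finset ι)).PairwiseDisjoint id) {f : Finset ι → (ι → X) → K}
    (hf : ∀ B ∈ 𝓑, DependsOn (f B) B) :
    𝔼 x, ∏ B ∈ 𝓑, f B x = ∏ B ∈ 𝓑, 𝔼 x, f B x := by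
  induction 𝓑 using Finset.induction_on with
  | empty => simp
  | insert B 𝓑 hB ih =>
    simp only [prod_insert hB]
    rw [expect_mul_of_dependsOn B (hf B (mem_insert_self _ _)), ih]
    · exact h𝓑.subset (by simp)
    · exact fun C hC => hf C (mem_insert_of_mem hC)
    · intro x y hxy
      refine prod_congr rfl fun C hC => hf C (mem_insert_of_mem hC) fun i hi => hxy i ?_
      have hBC : Disjoint B C := h𝓑 (by simp) (by simp [hC]) fun h => hB (h ▸ hC)
      simpa using disjoint_right.1 hBC hi

end Independence

section PartitionMeans

open Finset

variable {ι K : Type*} [DecidableEq ι] [Field K]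

/-- The mean of `∏ B, v B` over the colour classes `B` of a uniformly random colouring of `I` with
`r` colours. -/
def partitionMean (r : ℕ) (v : Finset ι → K) (I : Finset ι) : K :=
  ∑ P : Finpartition I, (r.descFactorial #P.parts : K) / (r : K) ^ #I * ∏ B ∈ P.parts, v B

/-- The contribution of the proper partitions of `I` to `partitionMean r v I`, normalised so that
the trivial partition contributes `v I`. -/
def splitSum (r : ℕ) (v : Finset ι → K) (I : Finset ι) : K :=
  ∑ P ∈ properPartitions I, ((r - 1).descFactorial (#P.parts - 1) : K) * ∏ B ∈ P.parts, v B

theorem partitionMean_eq_div [CharZero K] {r : ℕ} (hr : r ≠ 0) (v : Finset ι → K)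
    {I : Finset ι} (hI : I.Nonempty) :
    partitionMean r v I = (v I + splitSum r v I) / (r : K) ^ (#I - 1) := by
  have hr' : (r : K) ≠ 0 := Nat.cast_ne_zero.2 hr
  have hterm (P : Finpartition I) : (r.descFactorial #P.parts : K) / (r : K) ^ #I =
      ((r - 1).descFactorial (#P.parts - 1) : K) / (r : K) ^ (#I - 1) := by
    obtain ⟨m, rfl⟩ := Nat.exists_eq_succ_of_ne_zero hr
    obtain ⟨k, hk⟩ := Nat.exists_eq_succ_of_ne_zero
      (card_pos.2 (P.parts_nonempty hI.ne_empty)).ne'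
    rw [hk, Nat.succ_descFactorial_succ, ← mul_pow_sub_one hI.card_ne_zero, Nat.cast_mul,
      mul_div_mul_left _ _ hr']
    rfl
  simp only [partitionMean, hterm]
  rw [sum_finpartition_eq_add_sum_proper hI]
  simp only [parts_top hI, card_singleton, Nat.sub_self, Nat.descFactorial_zero,
    Nat.cast_one, prod_singleton, splitSum, add_div, sum_div, div_mul_eq_mul_div, one_mul]

end PartitionMeans

section EdgeMeans

open Finset
open scoped BigOperators

variable {ι R X A K : Type*} [DecidableEq ι] {E : Finset (ι × ι)} {I : Finset ι}

/-- The edges of `E` with both endpoints in `I`. -/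
def edgesIn (E : Finset (ι × ι)) (I : Finset ι) : Finset (ι × ι) :=
  {e ∈ E | e.1 ∈ I ∧ e.2 ∈ I}

theorem mem_edgesIn {e : ι × ι} : e ∈ edgesIn E I ↔ e ∈ E ∧ e.1 ∈ I ∧ e.2 ∈ I := mem_filter

theorem edgesIn_filter_eq_biUnion [DecidableEq R] (c : ι → R) :
    {e ∈ edgesIn E I | c e.1 = c e.2} = (kernelPartition c I).parts.biUnion (edgesIn E) := by
  ext e
  simp only [mem_filter, mem_biUnion, mem_edgesIn]
  constructor
  · rintro ⟨⟨he, h₁, h₂⟩, hc⟩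
    rw [← part_kernelPartition_eq_iff c h₁ h₂] at hc
    exact ⟨_, (kernelPartition c I).part_mem.2 h₁, he,
      (kernelPartition c I).mem_part_self.2 h₁, hc ▸ (kernelPartition c I).mem_part_self.2 h₂⟩
  · rintro ⟨B, hB, he, h₁, h₂⟩
    have hI := (kernelPartition c I).subset hB
    refine ⟨⟨he, hI h₁, hI h₂⟩, (part_kernelPartition_eq_iff c (hI h₁) (hI h₂)).1 ?_⟩
    rw [(kernelPartition c I).part_eq_of_mem hB h₁, (kernelPartition c I).part_eq_of_mem hB h₂]

theorem edgesIn_singleton (hE : ∀ e ∈ E, e.1 ≠ e.2) (i : ι) : edgesIn E {i} = ∅ := by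
  refine eq_empty_of_forall_notMem fun e he => ?_
  obtain ⟨he, h₁, h₂⟩ := mem_edgesIn.1 he
  exact hE e he ((mem_singleton.1 h₁).trans (mem_singleton.1 h₂).symm)

theorem prod_edgesIn_ite_eq_prod_parts [DecidableEq R] [CommMonoid K] (c : ι → R)
    (f : ι × ι → K) :
    ∏ e ∈ edgesIn E I, (if c e.1 = c e.2 then f e else 1) =
      ∏ B ∈ (kernelPartition c I).parts, ∏ e ∈ edgesIn E B, f e := by
  rw [← prod_filter, edgesIn_filter_eq_biUnion]
  refine prod_biUnion fun B hB B' hB' hne => disjoint_left.2 fun e he he' => hne ?_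
  exact (kernelPartition c I).eq_of_mem_parts hB hB' (mem_edgesIn.1 he).2.1 (mem_edgesIn.1 he').2.1

theorem dependsOn_prod_edgesIn [CommMonoid K] (k : ι × ι → X → X → K) :
    DependsOn (fun x : ι → X => ∏ e ∈ edgesIn E I, k e (x e.1) (x e.2)) I := by
  intro x y hxy
  refine prod_congr rfl fun e he => ?_
  obtain ⟨-, h₁, h₂⟩ := mem_edgesIn.1 he
  rw [hxy _ h₁, hxy _ h₂]

variable [Field K]

/-- The kernel on `R × X` that is `1` on pairs with distinct first coordinates and `t` times the
kernel `k` of the second coordinates otherwise. -/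
def extendKernel [DecidableEq R] (t : K) (k : X → X → K) (x y : R × X) : K :=
  if x.1 = y.1 then t * k x.2 y.2 else 1

/-- The kernel on words of length `n` that is `t ^ m` if the longest common prefix has length
`m < n`, and `0` on the diagonal. -/
def treeKernel [DecidableEq A] (t : K) : (n : ℕ) → (Fin n → A) → (Fin n → A) → K
  | 0, _, _ => 0
  | n + 1, u, v => extendKernel t (treeKernel t n) (u 0, Fin.tail u) (v 0, Fin.tail v)

variable [Fintype ι]

/-- The mean over all `x : ι → X` of the product of the kernels `k e` over the edges inside
`I`. -/
def edgeMean [CharZero K] [Fintype X] (E : Finset (ι × ι)) (k : ι × ι → X → X → K)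
    (I : Finset ι) : K :=
  𝔼 x : ι → X, ∏ e ∈ edgesIn E I, k e (x e.1) (x e.2)

variable [CharZero K]

theorem edgeMean_equiv [Fintype X] {Y : Type*} [Fintype Y] (φ : X ≃ Y) (k : ι × ι → Y → Y → K) :
    edgeMean E (fun e x y => k e (φ x) (φ y)) I = edgeMean E k I :=
  Fintype.expect_equiv (Equiv.piCongrRight fun _ => φ) _ _ fun _ => rfl

theorem expect_prod_kernelPartition [DecidableEq R] [Fintype R] [Nonempty R]
    (v : Finset ι → K) :
    𝔼 c : ι → R, ∏ B ∈ (kernelPartition c I).parts, v B =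
      partitionMean (Fintype.card R) v I := by
  have hR : (Fintype.card R : K) ≠ 0 := Nat.cast_ne_zero.2 Fintype.card_ne_zero
  have hpow := pow_sub_mul_pow (Fintype.card R : K) (card_le_univ I)
  rw [Fintype.expect_eq_sum_div_card,
    ← Finset.sum_fiberwise' univ (kernelPartition · I) fun P => ∏ B ∈ P.parts, v B,
    Finset.sum_div]
  refine sum_congr rfl fun P _ => ?_
  rw [sum_const, card_kernelPartition_eq, nsmul_eq_mul, Fintype.card_fun, Nat.cast_mul,
    Nat.cast_pow, Nat.cast_pow, ← hpow]
  field_simp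

theorem edgeMean_extendKernel [DecidableEq R] [Fintype R] [Nonempty R] [Fintype X] [Nonempty X]
    (t : ι × ι → K) (k : ι × ι → X → X → K) :
    edgeMean E (fun e => extendKernel (R := R) (t e) (k e)) I =
      partitionMean (Fintype.card R)
        (fun B => (∏ e ∈ edgesIn E B, t e) * edgeMean E k B) I := by
  have hcolour : ∀ c : ι → R,
      𝔼 y : ι → X, ∏ e ∈ edgesIn E I,
        (if c e.1 = c e.2 then t e * k e (y e.1) (y e.2) else 1) =
      ∏ B ∈ (kernelPartition c I).parts, (∏ e ∈ edgesIn E B, t e) * edgeMean E k B := by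
    intro c
    have hprod (y : ι → X) := prod_edgesIn_ite_eq_prod_parts (E := E) (I := I) c
      fun e => t e * k e (y e.1) (y e.2)
    simp only [hprod, prod_mul_distrib]
    rw [← mul_expect, expect_prod_of_dependsOn (kernelPartition c I).disjoint
      fun B _ => dependsOn_prod_edgesIn k]
    rfl
  rw [← expect_prod_kernelPartition]
  simp only [← hcolour]
  rw [← expect_product' univ univ, univ_product_univ]
  exact Fintype.expect_equiv (Equiv.arrowProdEquivProdArrow ι _ _) _ _ fun _ => rfl

end EdgeMeans

section AffineRecursion

open Filter Topology

theorem tendsto_zero_of_le_mul_add {x y : ℕ → ℝ} {r : ℝ} (hr₀ : 0 ≤ r) (hr₁ : r < 1)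
    (hx : ∀ n, 0 ≤ x n) (hy : Tendsto y atTop (𝓝 0)) (hxy : ∀ n, x (n + 1) ≤ r * x n + y n) :
    Tendsto x atTop (𝓝 0) := by
  refine tendsto_order.2 ⟨fun a ha => .of_forall fun n => ha.trans_le (hx n), fun ε hε => ?_⟩
  obtain ⟨m, hm⟩ := eventually_atTop.1
    (hy.eventually_le_const (show 0 < ε / 2 * (1 - r) by nlinarith))
  have hgeom (k : ℕ) : x (m + k) ≤ r ^ k * x m + ε / 2 := by
    induction k with
    | zero => simpa using (half_pos hε).le
    | succ k ih =>
      calc x (m + k + 1) ≤ r * x (m + k) + y (m + k) := hxy _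
        _ ≤ r * (r ^ k * x m + ε / 2) + ε / 2 * (1 - r) := by
          gcongr
          exact hm _ (Nat.le_add_right _ _)
        _ = r ^ (k + 1) * x m + ε / 2 := by ring
  have hlim : Tendsto (fun k => r ^ k * x m + ε / 2) atTop (𝓝 (0 * x m + ε / 2)) :=
    ((tendsto_pow_atTop_nhds_zero_of_lt_one hr₀ hr₁).mul_const _).add_const _
  rw [← map_add_atTop_eq_nat m, eventually_map]
  filter_upwards [hlim.eventually_lt_const (by linarith : 0 * x m + ε / 2 < ε)] with k hk
  exact (add_comm k m ▸ hgeom k).trans_lt hk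

theorem tendsto_div_sub_one_of_eq_inv_mul_add {K : Type*} [NormedField K] {a b : ℕ → K} {C β : K}
    (hC : 1 < ‖C‖) (hb : Tendsto b atTop (𝓝 β)) (hab : ∀ n, a (n + 1) = C⁻¹ * (a n + b n)) :
    Tendsto a atTop (𝓝 (β / (C - 1))) := by
  have hC₀ : C ≠ 0 := norm_pos_iff.1 (zero_lt_one.trans hC)
  have hC₁ : C - 1 ≠ 0 := sub_ne_zero.2 fun h => hC.ne' (h ▸ norm_one)
  have hstep (n : ℕ) : a (n + 1) - β / (C - 1) = C⁻¹ * (a n - β / (C - 1)) + C⁻¹ * (b n - β) := by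
    rw [hab]
    field_simp
    ring
  have herror : Tendsto (fun n => ‖C⁻¹ * (b n - β)‖) atTop (𝓝 0) := by
    simpa using ((hb.sub_const β).const_mul C⁻¹).norm
  refine tendsto_iff_norm_sub_tendsto_zero.2 (tendsto_zero_of_le_mul_add (norm_nonneg C⁻¹)
    (norm_inv C ▸ inv_lt_one_of_one_lt₀ hC) (fun _ => norm_nonneg _) herror fun n => ?_)
  rw [hstep, ← norm_mul]
  exact norm_add_le _ _

end AffineRecursion

section TreeRecursion

open Finset Filter Topology

variable {ι K : Type*} [DecidableEq ι]

/-- The recursion satisfied by the block means of the kernels on words of length `n` over an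
alphabet with `q` letters: `C I` is the factor lost by a block `I` each time all its words share
one more letter. -/
structure IsTreeRecursion [Field K] (q : ℕ) (C : Finset ι → K) (v : ℕ → Finset ι → K) : Prop where
  singleton : ∀ n i, v n {i} = 1
  zero : ∀ I, 1 < #I → v 0 I = 0
  succ : ∀ n I, 1 < #I → v (n + 1) I = (C I)⁻¹ * (v n I + splitSum q (v n) I)

section TreeMean

variable (A : Type*) [DecidableEq A] [Fintype A] [Fintype ι] [Field K] [CharZero K]

/-- The mean of the product of the tree kernels over the edges inside `I`, each multiplied by its
parameter `t e`; it is the contribution of a block of words that already share one letter. -/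
def treeMean (E : Finset (ι × ι)) (t : ι × ι → K) (n : ℕ) (I : Finset ι) : K :=
  (∏ e ∈ edgesIn E I, t e) * edgeMean E (fun e => treeKernel (A := A) (t e) n) I

/-- The inverse of the mean effect on a block `I` of one more common letter: the words of `I` agree
in that letter with probability `#A ^ (1 - #I)`, and each edge then contributes its parameter. -/
def blockFactor (E : Finset (ι × ι)) (t : ι × ι → K) (I : Finset ι) : K :=
  (Fintype.card A : K) ^ (#I - 1) / ∏ e ∈ edgesIn E I, t e

variable [Nonempty A] {E : Finset (ι × ι)}

theorem edgeMean_treeKernel_succ (t : ι × ι → K) (n : ℕ) (I : Finset ι) :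
    edgeMean E (fun e => treeKernel (A := A) (t e) (n + 1)) I =
      partitionMean (Fintype.card A) (treeMean A E t n) I := by
  unfold treeMean
  rw [← edgeMean_extendKernel]
  exact edgeMean_equiv (Fin.consEquiv fun _ => A).symm _

theorem isTreeRecursion_treeMean (hE : ∀ e ∈ E, e.1 ≠ e.2)
    (hcomplete : ∀ I : Finset ι, 1 < #I → (edgesIn E I).Nonempty) (t : ι × ι → K) :
    IsTreeRecursion (Fintype.card A) (blockFactor A E t) (treeMean A E t) where
  singleton n i := by simp [treeMean, edgeMean, edgesIn_singleton hE]
  zero I hI := by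
    obtain ⟨e, he⟩ := hcomplete I hI
    simp only [treeMean, edgeMean, treeKernel, prod_const, zero_pow (card_ne_zero_of_mem he),
      expect_const_zero, mul_zero]
  succ n I hI := by
    rw [treeMean, edgeMean_treeKernel_succ, partitionMean_eq_div Fintype.card_ne_zero _
      (card_pos.1 (zero_lt_one.trans hI)), blockFactor, inv_div, mul_div_assoc', div_mul_eq_mul_div]

end TreeMean

section Limits

variable [NormedField K] {q : ℕ} {C : Finset ι → K} {v : ℕ → Finset ι → K}

theorem tendsto_splitSum (r : ℕ) {V : Finset ι → K} {I : Finset ι}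
    (hV : ∀ B ⊂ I, B.Nonempty → Tendsto (fun n => v n B) atTop (𝓝 (V B))) :
    Tendsto (fun n => splitSum r (v n) I) atTop (𝓝 (splitSum r V I)) :=
  tendsto_finsetSum _ fun P hP => (tendsto_finsetProd _ fun B hB =>
    hV B (ssubset_of_mem_properPartitions hP hB) (P.nonempty_of_mem_parts hB)).const_mul _

theorem tendsto_partitionMean (r : ℕ) {V : Finset ι → K} {I : Finset ι}
    (hV : ∀ B, B.Nonempty → Tendsto (fun n => v n B) atTop (𝓝 (V B))) :
    Tendsto (fun n => partitionMean r (v n) I) atTop (𝓝 (partitionMean r V I)) :=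
  tendsto_finsetSum _ fun P _ =>
    (tendsto_finsetProd _ fun B hB => hV B (P.nonempty_of_mem_parts hB)).const_mul _

theorem IsTreeRecursion.exists_tendsto (h : IsTreeRecursion q C v)
    (hC : ∀ I, 1 < #I → 1 < ‖C I‖) :
    ∃ V : Finset ι → K, (∀ i, V {i} = 1) ∧ (∀ I, 1 < #I → V I = splitSum q V I / (C I - 1)) ∧
      ∀ I, I.Nonempty → Tendsto (fun n => v n I) atTop (𝓝 (V I)) := by
  have hsingleton (i : ι) : Tendsto (fun n => v n {i}) atTop (𝓝 1) := by
    simp only [h.singleton, tendsto_const_nhds]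
  have hlim {V : Finset ι → K} {I : Finset ι} (hI : 1 < #I)
      (hV : ∀ B ⊂ I, B.Nonempty → Tendsto (fun n => v n B) atTop (𝓝 (V B))) :
      Tendsto (fun n => v n I) atTop (𝓝 (splitSum q V I / (C I - 1))) :=
    tendsto_div_sub_one_of_eq_inv_mul_add (hC I hI) (tendsto_splitSum q hV) fun n => h.succ n I hI
  have hconv (I : Finset ι) (hI : I.Nonempty) : ∃ L, Tendsto (fun n => v n I) atTop (𝓝 L) := by
    induction I using Finset.strongInduction with
    | H I ih =>
      obtain hI₁ | ⟨i, rfl⟩ := (Nat.one_le_iff_ne_zero.2 hI.card_ne_zero).lt_or_eq'.imp_right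
        card_eq_one.1
      · choose! V hV using ih
        exact ⟨_, hlim hI₁ hV⟩
      · exact ⟨1, hsingleton i⟩
  choose! V hV using hconv
  exact ⟨V, fun i => tendsto_nhds_unique (hV _ (singleton_nonempty i)) (hsingleton i),
    fun I hI => tendsto_nhds_unique (hV I (card_pos.1 (zero_lt_one.trans hI)))
      (hlim hI fun B _ => hV B), hV⟩

end Limits

section Factorials

theorem two_le_card_parts {I : Finset ι} (hI : I.Nonempty) {P : Finpartition I}
    (hP : P ∈ properPartitions I) : 2 ≤ #P.parts := by
  obtain ⟨i, hi⟩ := hI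
  obtain ⟨B, hB, -⟩ := P.exists_mem hi
  obtain ⟨j, hj, hjB⟩ := exists_of_ssubset (ssubset_of_mem_properPartitions hP hB)
  obtain ⟨B', hB', hjB'⟩ := P.exists_mem hj
  exact one_lt_card.2 ⟨B, hB, B', hB', fun h => hjB (h ▸ hjB')⟩

theorem cast_descFactorial_succ [Ring K] (n k : ℕ) :
    (n.descFactorial (k + 1) : K) = (n - k) * n.descFactorial k := by
  obtain hk | hk := le_or_gt k n
  · rw [Nat.descFactorial_succ, Nat.cast_mul, Nat.cast_sub hk]
  · simp [Nat.descFactorial_of_lt hk]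

theorem add_splitSum_succ_eq_sum [Field K] {q : ℕ} (hq : q ≠ 0) {C : K} (hC : C ≠ 1)
    {V : Finset ι → K} {I : Finset ι} (hI : I.Nonempty) (hV : V I = splitSum q V I / (C - 1)) :
    V I + splitSum (q + 1) V I = ∑ P ∈ properPartitions I,
      (q * C + 1 - #P.parts) * ((q - 1).descFactorial (#P.parts - 2) : K) / (C - 1) *
        ∏ B ∈ P.parts, V B := by
  have hC' : C - 1 ≠ 0 := sub_ne_zero.2 hC
  rw [hV, splitSum, splitSum, sum_div, ← sum_add_distrib]
  refine sum_congr rfl fun P hP => ?_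
  obtain ⟨d, hd⟩ := Nat.exists_eq_add_of_le' (two_le_card_parts hI hP)
  obtain ⟨m, rfl⟩ := Nat.exists_eq_succ_of_ne_zero hq
  simp only [hd, Nat.add_sub_cancel, Nat.succ_eq_add_one, Nat.add_succ_sub_one,
    cast_descFactorial_succ (K := K) m d, Nat.succ_descFactorial_succ]
  push_cast
  field_simp
  ring

end Factorials

end TreeRecursion

section Divergence

open Finset Filter Topology

variable {ι : Type*} [DecidableEq ι] {I J B : Finset ι}

theorem exists_parts_eq_pair (hB : B.Nonempty) (hBI : B ⊂ I) :
    ∃ P ∈ properPartitions I, P.parts = {B, I \ B} ∧ B ≠ I \ B := by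
  have hB' : (I \ B).Nonempty := sdiff_nonempty.2 hBI.2
  have hne : B ≠ I \ B := fun h => hB.ne_empty (disjoint_self.1 (h ▸ disjoint_sdiff :))
  have hparts : ((Finpartition.indiscrete hB.ne_empty).extend hB'.ne_empty disjoint_sdiff
      (sup_sdiff_cancel_right hBI.1)).parts = {B, I \ B} := pair_comm _ _
  refine ⟨_, mem_properPartitions.2 fun h => ?_, hparts, hne⟩
  rw [hparts, mem_insert, mem_singleton] at h
  obtain h | h := h
  · exact hBI.ne h.symm
  · exact (sdiff_ssubset hBI.1 hB).ne h.symm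

theorem splitSum_nonneg (r : ℕ) {v : Finset ι → ℝ} (hv : ∀ B, 0 ≤ v B) : 0 ≤ splitSum r v I :=
  sum_nonneg fun _ _ => mul_nonneg (Nat.cast_nonneg _) (prod_nonneg fun _ _ => hv _)

theorem mul_le_splitSum {r : ℕ} (hr : 2 ≤ r) {v : Finset ι → ℝ} (hv : ∀ B, 0 ≤ v B)
    (hB : B.Nonempty) (hBI : B ⊂ I) : v B * v (I \ B) ≤ splitSum r v I := by
  obtain ⟨P, hP, hparts, hne⟩ := exists_parts_eq_pair hB hBI
  have hcoeff : (1 : ℝ) ≤ ((r - 1).descFactorial (#P.parts - 1) : ℝ) := by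
    rw [hparts, card_pair hne, Nat.descFactorial_one]
    exact_mod_cast Nat.le_sub_one_of_lt hr
  calc v B * v (I \ B) = ∏ C ∈ P.parts, v C := by rw [hparts, prod_pair hne]
    _ ≤ (r - 1).descFactorial (#P.parts - 1) * ∏ C ∈ P.parts, v C :=
      le_mul_of_one_le_left (prod_nonneg fun _ _ => hv _) hcoeff
    _ ≤ splitSum r v I := single_le_sum (f := fun P : Finpartition I =>
      ((r - 1).descFactorial (#P.parts - 1) : ℝ) * ∏ C ∈ P.parts, v C)
      (fun _ _ => mul_nonneg (Nat.cast_nonneg _) (prod_nonneg fun _ _ => hv _)) hP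

namespace IsTreeRecursion

variable {q : ℕ} {C : Finset ι → ℝ} {v : ℕ → Finset ι → ℝ}

theorem exists_pos_le_splitSum (h : IsTreeRecursion q C v) (hq : 2 ≤ q) (hv : ∀ n B, 0 ≤ v n B)
    (hlow : ∀ B ⊂ I, B.Nonempty → ∃ δ > 0, ∀ᶠ n in atTop, δ ≤ v n B) (hI : 1 < #I) :
    ∃ δ > 0, ∀ᶠ n in atTop, δ ≤ splitSum q (v n) I := by
  obtain ⟨i, hi⟩ := card_pos.1 (zero_lt_one.trans hI)
  have hiI : {i} ⊂ I := (singleton_subset_iff.2 hi).ssubset_of_ne fun hi' => by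
    simp [← hi'] at hI
  obtain ⟨δ, hδ, hδv⟩ := hlow (I \ {i}) (sdiff_ssubset hiI.1 (singleton_nonempty i))
    (sdiff_nonempty.2 hiI.2)
  refine ⟨δ, hδ, hδv.mono fun n hn => hn.trans ?_⟩
  simpa [h.singleton] using mul_le_splitSum hq (hv n) (singleton_nonempty i) hiI

theorem exists_pos_le (h : IsTreeRecursion q C v) (hq : 2 ≤ q) (hC : ∀ I, 0 < C I)
    (hv : ∀ n B, 0 ≤ v n B) (hI : I.Nonempty) : ∃ δ > 0, ∀ᶠ n in atTop, δ ≤ v n I := by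
  induction I using Finset.strongInduction with
  | H I ih =>
    obtain hI₁ | ⟨i, rfl⟩ := (Nat.one_le_iff_ne_zero.2 hI.card_ne_zero).lt_or_eq'.imp_right
      card_eq_one.1
    · obtain ⟨δ, hδ, hδS⟩ := h.exists_pos_le_splitSum hq hv ih hI₁
      refine ⟨(C I)⁻¹ * δ, mul_pos (inv_pos.2 (hC I)) hδ, ?_⟩
      rw [← map_add_atTop_eq_nat 1, eventually_map]
      filter_upwards [hδS] with n hn
      rw [h.succ n I hI₁]
      exact mul_le_mul_of_nonneg_left (hn.trans (le_add_of_nonneg_left (hv n I)))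
        (inv_pos.2 (hC I)).le
    · exact ⟨1, one_pos, .of_forall fun n => (h.singleton n i).ge⟩

theorem one_lt_of_bddAbove (h : IsTreeRecursion q C v) (hq : 2 ≤ q) (hC : ∀ I, 0 < C I)
    (hv : ∀ n B, 0 ≤ v n B) (hI : 1 < #I) (hb : BddAbove (Set.range fun n => v n I)) :
    1 < C I := by
  by_contra! hCI
  obtain ⟨δ, hδ, hδS⟩ := h.exists_pos_le_splitSum hq hv
    (fun B _ hB => h.exists_pos_le hq hC hv hB) hI
  obtain ⟨m, hm⟩ := eventually_atTop.1 hδS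
  have hgrowth (k : ℕ) : k * δ ≤ v (m + k) I := by
    induction k with
    | zero => simpa using hv m I
    | succ k ih =>
      calc ((k + 1 : ℕ) : ℝ) * δ = k * δ + δ := by push_cast; ring
        _ ≤ v (m + k) I + splitSum q (v (m + k)) I := add_le_add ih (hm _ (Nat.le_add_right _ _))
        _ ≤ (C I)⁻¹ * (v (m + k) I + splitSum q (v (m + k)) I) :=
          le_mul_of_one_le_left (add_nonneg (hv _ _) (splitSum_nonneg _ (hv _)))
            ((one_le_inv₀ (hC I)).2 hCI)
        _ = v (m + (k + 1)) I := (h.succ _ I hI).symm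
  obtain ⟨M, hM⟩ := hb
  obtain ⟨k, hk⟩ := exists_nat_gt (M / δ)
  exact ((div_lt_iff₀ hδ).1 hk).not_ge ((hgrowth k).trans (hM ⟨m + k, rfl⟩))

theorem bddAbove_of_bddAbove_partitionMean (h : IsTreeRecursion q C v) (hq : 2 ≤ q)
    (hC : ∀ I, 0 < C I) (hv : ∀ n B, 0 ≤ v n B) {r : ℕ} (hr : 2 ≤ r) (hI : I.Nonempty)
    (hIJ : I ⊆ J) (hb : BddAbove (Set.range fun n => partitionMean r (v n) J)) :
    BddAbove (Set.range fun n => v n I) := by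
  have hr₀ : 0 < (r : ℝ) ^ (#J - 1) := pow_pos (Nat.cast_pos.2 (by omega)) _
  obtain ⟨M, hM⟩ := hb
  have hJ (n : ℕ) : v n J + splitSum r (v n) J ≤ M * (r : ℝ) ^ (#J - 1) := by
    rw [← div_le_iff₀ hr₀, ← partitionMean_eq_div (by omega) _ (hI.mono hIJ)]
    exact hM ⟨n, rfl⟩
  obtain rfl | hne := eq_or_ne I J
  · refine ⟨M * (r : ℝ) ^ (#I - 1), Set.forall_mem_range.2 fun n => le_trans ?_ (hJ n)⟩
    exact le_add_of_nonneg_right (splitSum_nonneg r (hv n))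
  · have hIJ' := hIJ.ssubset_of_ne hne
    obtain ⟨δ, hδ, hδv⟩ := h.exists_pos_le hq hC hv (sdiff_nonempty.2 hIJ'.2)
    refine (isBoundedUnder_of_eventually_le (a := M * (r : ℝ) ^ (#J - 1) / δ) ?_).bddAbove_range
    filter_upwards [hδv] with n hn
    rw [le_div_iff₀ hδ]
    calc v n I * δ ≤ v n I * v n (J \ I) := mul_le_mul_of_nonneg_left hn (hv n I)
      _ ≤ splitSum r (v n) J := mul_le_splitSum hr (hv n) hI hIJ'
      _ ≤ M * (r : ℝ) ^ (#J - 1) := (le_add_of_nonneg_left (hv n J)).trans (hJ n)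

theorem one_lt_of_bddAbove_partitionMean (h : IsTreeRecursion q C v) (hq : 2 ≤ q)
    (hC : ∀ I, 0 < C I) (hv : ∀ n B, 0 ≤ v n B) {r : ℕ} (hr : 2 ≤ r)
    (hb : BddAbove (Set.range fun n => partitionMean r (v n) J)) (hIJ : I ⊆ J) (hI : 1 < #I) :
    1 < C I :=
  h.one_lt_of_bddAbove hq hC hv hI <| h.bddAbove_of_bddAbove_partitionMean hq hC hv hr
    (card_pos.1 (zero_lt_one.trans hI)) hIJ hb

end IsTreeRecursion

end Divergence

section Truncation

open Filter Topology
open scoped ENNReal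

theorem integrable_iff_bddAbove_integral_norm {Ω E : Type*} [MeasurableSpace Ω] {μ : Measure Ω}
    [NormedAddCommGroup E] {f : Ω → E} {g : ℕ → Ω → E} (hg : ∀ n, Integrable (g n) μ)
    (hle : ∀ n, ∀ᵐ x ∂μ, ‖g n x‖ ≤ ‖f x‖)
    (hlim : ∀ᵐ x ∂μ, Tendsto (fun n => g n x) atTop (𝓝 (f x))) :
    Integrable f μ ↔ BddAbove (Set.range fun n => ∫ x, ‖g n x‖ ∂μ) := by
  refine ⟨fun hf => ⟨∫ x, ‖f x‖ ∂μ, Set.forall_mem_range.2 fun n =>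
    integral_mono_ae (hg n).norm hf.norm (hle n)⟩, fun ⟨M, hM⟩ =>
    ⟨aestronglyMeasurable_of_tendsto_ae _ (fun n => (hg n).aestronglyMeasurable) hlim, ?_⟩⟩
  have hbound (n : ℕ) : ∫⁻ x, ‖g n x‖ₑ ∂μ ≤ ENNReal.ofReal M := by
    rw [← ofReal_integral_norm_eq_lintegral_enorm (hg n)]
    exact ENNReal.ofReal_le_ofReal (hM ⟨n, rfl⟩)
  calc ∫⁻ x, ‖f x‖ₑ ∂μ = ∫⁻ x, liminf (fun n => ‖g n x‖ₑ) atTop ∂μ :=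
        lintegral_congr_ae (hlim.mono fun x hx => hx.enorm.liminf_eq.symm)
    _ ≤ liminf (fun n => ∫⁻ x, ‖g n x‖ₑ ∂μ) atTop :=
        lintegral_liminf_le' fun n => (hg n).aestronglyMeasurable.enorm
    _ ≤ liminf (fun _ : ℕ => ENNReal.ofReal M) atTop := liminf_le_liminf (.of_forall hbound)
    _ = ENNReal.ofReal M := liminf_const _
    _ < ∞ := ENNReal.ofReal_lt_top

end Truncation

section UniformCodings

open Finset ProbabilityTheory
open scoped BigOperators ENNReal

theorem comp_eq_sum_indicator {Ω X ι : Type*} [Fintype X] [Fintype ι] [DecidableEq ι]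
    (D : Ω → X) {M : Type*} [AddCommMonoid M] (F : (ι → X) → M) :
    (fun x : ι → Ω => F fun i => D (x i)) = fun x => ∑ a,
      (Set.univ.pi fun i => D ⁻¹' {a i}).indicator (fun _ => F a) x := by
  funext x
  rw [sum_eq_single fun i => D (x i)]
  · have hx : x ∈ Set.univ.pi fun i => D ⁻¹' {D (x i)} := fun _ _ => rfl
    exact (Set.indicator_of_mem hx fun _ => F fun i => D (x i)).symm
  · exact fun a _ ha => Set.indicator_of_notMem
      (fun hx => ha (funext fun i => (hx i trivial).symm)) _
  · exact fun h => (h (mem_univ _)).elim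

variable {Ω X ι : Type*} [MeasurableSpace Ω] [Fintype X] {ν : Measure Ω} {D : Ω → X}

/-- A map to a finite set that pushes `ν` forward to the uniform distribution. It is stated through
fibres, so that `X` need not carry a `MeasurableSpace` structure. -/
structure IsUniformCoding (ν : Measure Ω) (D : Ω → X) : Prop where
  measurableSet_preimage : ∀ a, MeasurableSet (D ⁻¹' {a})
  measure_preimage : ∀ a, ν (D ⁻¹' {a}) = (Fintype.card X : ℝ≥0∞)⁻¹

theorem IsUniformCoding.of_measure_preimage_eq [IsProbabilityMeasure ν]
    (hD : ∀ a, MeasurableSet (D ⁻¹' {a})) (hν : ∀ a b, ν (D ⁻¹' {a}) = ν (D ⁻¹' {b})) :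
    IsUniformCoding ν D where
  measurableSet_preimage := hD
  measure_preimage a := by
    have htotal := sum_measure_preimage_singleton (μ := ν) (f := D) univ fun b _ => hD b
    simp only [coe_univ, Set.preimage_univ, measure_univ, hν _ a, sum_const, nsmul_eq_mul,
      card_univ] at htotal
    exact ENNReal.eq_inv_of_mul_eq_one_left (mul_comm _ (ν _) ▸ htotal)

variable [Fintype ι] [IsProbabilityMeasure ν]

theorem IsUniformCoding.measure_pi_setOf_eq_le (hD : IsUniformCoding ν D) {i j : ι} (hij : i ≠ j) :
    Measure.pi (fun _ => ν) {x : ι → Ω | D (x i) = D (x j)} ≤ (Fintype.card X : ℝ≥0∞)⁻¹ := by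
  set μ : Measure (ι → Ω) := Measure.pi fun _ => ν
  set M := (Fintype.card X : ℝ≥0∞)
  have hindep : IndepFun (Function.eval i) (Function.eval j) μ :=
    (iIndepFun_pi (X := fun _ => id) fun _ => aemeasurable_id).indepFun hij
  have hfibre (k : ι) (a : X) : μ (Function.eval k ⁻¹' (D ⁻¹' {a})) = M⁻¹ := by
    rw [(measurePreserving_eval (fun _ => ν) k).measure_preimage
      (hD.measurableSet_preimage a).nullMeasurableSet, hD.measure_preimage]
  have hcover : {x : ι → Ω | D (x i) = D (x j)} ⊆ ⋃ a : X,
      Function.eval i ⁻¹' (D ⁻¹' {a}) ∩ Function.eval j ⁻¹' (D ⁻¹' {a}) :=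
    fun x hx => Set.mem_iUnion.2 ⟨D (x i), rfl, hx.symm⟩
  calc μ {x | D (x i) = D (x j)}
      ≤ ∑ a, μ (Function.eval i ⁻¹' (D ⁻¹' {a}) ∩ Function.eval j ⁻¹' (D ⁻¹' {a})) :=
        (measure_mono hcover).trans (measure_iUnion_fintype_le _ _)
    _ = M * M⁻¹ * M⁻¹ := by
        simp only [hindep.measure_inter_preimage_eq_mul _ _ (hD.measurableSet_preimage _)
          (hD.measurableSet_preimage _), hfibre, sum_const, card_univ, nsmul_eq_mul, mul_assoc, M]
    _ ≤ M⁻¹ := mul_le_of_le_one_left zero_le (ENNReal.mul_inv_le_one _)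

variable {𝕜 : Type*} [RCLike 𝕜]

theorem IsUniformCoding.integrable_indicator_pi (hD : IsUniformCoding ν D) (a : ι → X) (c : 𝕜) :
    Integrable ((Set.univ.pi fun i => D ⁻¹' {a i}).indicator fun _ => c)
      (Measure.pi fun _ => ν) :=
  (integrable_const c).indicator (.univ_pi fun i => hD.measurableSet_preimage (a i))

theorem IsUniformCoding.integrable_pi_comp (hD : IsUniformCoding ν D) (F : (ι → X) → 𝕜) :
    Integrable (fun x : ι → Ω => F fun i => D (x i)) (Measure.pi fun _ => ν) := by
  classical
  rw [comp_eq_sum_indicator]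
  exact integrable_finsetSum _ fun a _ => hD.integrable_indicator_pi a _

variable [DecidableEq ι]

theorem IsUniformCoding.integral_pi_comp (hD : IsUniformCoding ν D) (F : (ι → X) → 𝕜) :
    ∫ x : ι → Ω, F (fun i => D (x i)) ∂(Measure.pi fun _ => ν) = 𝔼 a, F a := by
  have hbox (a : ι → X) : (Measure.pi fun _ => ν).real (Set.univ.pi fun i => D ⁻¹' {a i}) =
      (Fintype.card (ι → X) : ℝ)⁻¹ := by
    simp [measureReal_def, Measure.pi_pi, hD.measure_preimage]
  rw [comp_eq_sum_indicator, integral_finsetSum _ fun a _ => hD.integrable_indicator_pi a _,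
    Fintype.expect_eq_sum_div_card, sum_div]
  refine sum_congr rfl fun a _ => ?_
  rw [integral_indicator_const _ (.univ_pi fun i => hD.measurableSet_preimage (a i)), hbox,
    RCLike.real_smul_eq_coe_mul, RCLike.ofReal_inv, RCLike.ofReal_natCast, div_eq_inv_mul]

end UniformCodings

section TreeCodings

open Finset Filter Topology
open scoped BigOperators ENNReal

variable {ι R A Ω 𝕜 : Type*}

theorem norm_blockFactor [DecidableEq ι] [Fintype A] [RCLike 𝕜] (E : Finset (ι × ι)) (t : ι × ι → 𝕜)
    (I : Finset ι) : ‖blockFactor A E t I‖ = blockFactor A E (fun e => ‖t e‖) I := by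
  rw [blockFactor, blockFactor, norm_div, norm_pow, norm_prod, RCLike.norm_natCast]

variable [DecidableEq R] [DecidableEq A]

theorem norm_extendKernel [NormedField 𝕜] {X : Type*} (t : 𝕜) (k : X → X → 𝕜) (x y : R × X) :
    ‖extendKernel t k x y‖ = extendKernel ‖t‖ (fun u v => ‖k u v‖) x y := by
  unfold extendKernel
  split_ifs
  · exact norm_mul _ _
  · exact norm_one

theorem norm_treeKernel [NormedField 𝕜] (t : 𝕜) (n : ℕ) (u v : Fin n → A) :
    ‖treeKernel t n u v‖ = treeKernel ‖t‖ n u v := by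
  induction n with
  | zero => exact norm_zero
  | succ n ih => simp only [treeKernel, norm_extendKernel, ih]

theorem treeKernel_nonneg {t : ℝ} (ht : 0 ≤ t) (n : ℕ) (u v : Fin n → A) :
    0 ≤ treeKernel t n u v := by
  rw [← Real.norm_of_nonneg ht, ← norm_treeKernel]
  exact norm_nonneg _

variable [Fintype A]

theorem treeMean_nonneg [DecidableEq ι] [Fintype ι] (E : Finset (ι × ι)) {t : ι × ι → ℝ}
    (ht : ∀ e, 0 ≤ t e) (n : ℕ) (I : Finset ι) : 0 ≤ treeMean A E t n I :=
  mul_nonneg (prod_nonneg fun e _ => ht e) <|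
    expect_nonneg fun _ _ => prod_nonneg fun e _ => treeKernel_nonneg (ht e) n _ _

variable [Fintype R]

/-- A sequence of increasingly fine uniform codings of a probability space by a root letter in `R`
and a word over `A`, together with kernels `k e` which are given by the tree kernels on the pairs
that are separated by the codings. -/
structure IsTreeCoding [MeasurableSpace Ω] [Field 𝕜] (ν : Measure Ω)
    (D : ∀ n, Ω → R × (Fin n → A)) (t : ι × ι → 𝕜) (k : ι × ι → Ω → Ω → 𝕜) : Prop where
  uniform : ∀ n, IsUniformCoding ν (D n)
  refines : ∀ n x y, D (n + 1) x = D (n + 1) y → D n x = D n y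
  kernel : ∀ e n x y, extendKernel (t e) (treeKernel (t e) n) (D n x) (D n y) =
    if D n x = D n y then 0 else k e x y

/-- The product over all edges of the tree kernels of the codings of length `n`; the points that
these codings do not separate contribute `0`. -/
def truncation [Field 𝕜] (D : ∀ n, Ω → R × (Fin n → A)) (E : Finset (ι × ι)) (t : ι × ι → 𝕜)
    (n : ℕ) (x : ι → Ω) : 𝕜 :=
  ∏ e ∈ E, extendKernel (t e) (treeKernel (t e) n) (D n (x e.1)) (D n (x e.2))

theorem expect_prod_eq_partitionMean [DecidableEq ι] [Fintype ι] [Field 𝕜] [CharZero 𝕜]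
    [Nonempty R] [Nonempty A] (E : Finset (ι × ι)) (t : ι × ι → 𝕜) (n : ℕ) :
    𝔼 a : ι → R × (Fin n → A),
      ∏ e ∈ E, extendKernel (t e) (treeKernel (t e) n) (a e.1) (a e.2) =
    partitionMean (Fintype.card R) (treeMean A E t n) univ := by
  unfold treeMean
  rw [← edgeMean_extendKernel, edgeMean, edgesIn,
    filter_true_of_mem fun e _ => ⟨mem_univ _, mem_univ _⟩]

namespace IsTreeCoding

variable [MeasurableSpace Ω] {ν : Measure Ω} [RCLike 𝕜] {D : ∀ n, Ω → R × (Fin n → A)}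
  {E : Finset (ι × ι)} {t : ι × ι → 𝕜} {k : ι × ι → Ω → Ω → 𝕜}

theorem norm_truncation_le (h : IsTreeCoding ν D t k) (n : ℕ) (x : ι → Ω) :
    ‖truncation D E t n x‖ ≤ ‖∏ e ∈ E, k e (x e.1) (x e.2)‖ := by
  rw [truncation, norm_prod, norm_prod]
  refine prod_le_prod (fun _ _ => norm_nonneg _) fun e _ => ?_
  rw [h.kernel]
  split_ifs
  · exact norm_zero.trans_le (norm_nonneg _)
  · exact le_rfl

variable [IsProbabilityMeasure ν] [Fintype ι]

theorem ae_eventually_ne [Nontrivial A] [Nonempty R] (h : IsTreeCoding ν D t k)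
    {i j : ι} (hij : i ≠ j) :
    ∀ᵐ x ∂Measure.pi fun _ : ι => ν, ∀ᶠ n in atTop, D n (x i) ≠ D n (x j) := by
  have hcard (n : ℕ) : n ≤ Fintype.card (R × (Fin n → A)) := by
    rw [Fintype.card_prod, Fintype.card_fun, Fintype.card_fin]
    exact (Nat.lt_pow_self Fintype.one_lt_card).le.trans (Nat.le_mul_of_pos_left _ Fintype.card_pos)
  have hnull : Measure.pi (fun _ => ν) {x : ι → Ω | ∀ n, D n (x i) = D n (x j)} = 0 := by
    refine le_antisymm (ge_of_tendsto' ENNReal.tendsto_inv_nat_nhds_zero fun n => ?_) zero_le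
    calc Measure.pi (fun _ => ν) {x : ι → Ω | ∀ n, D n (x i) = D n (x j)}
        ≤ Measure.pi (fun _ => ν) {x : ι → Ω | D n (x i) = D n (x j)} :=
          measure_mono fun x hx => hx n
      _ ≤ (Fintype.card (R × (Fin n → A)) : ℝ≥0∞)⁻¹ :=
          (h.uniform n).measure_pi_setOf_eq_le hij
      _ ≤ (n : ℝ≥0∞)⁻¹ := ENNReal.inv_le_inv.2 (Nat.cast_le.2 (hcard n))
  filter_upwards [measure_eq_zero_iff_ae_notMem.1 hnull] with x hx
  obtain ⟨m, hm⟩ := not_forall.1 hx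
  refine eventually_atTop.2 ⟨m, fun n hn => Nat.le_induction hm (fun n _ hne heq => ?_) n hn⟩
  exact hne (h.refines n _ _ heq)

theorem ae_tendsto_truncation [Nontrivial A] [Nonempty R] (h : IsTreeCoding ν D t k)
    (hE : ∀ e ∈ E, e.1 ≠ e.2) : ∀ᵐ x ∂Measure.pi fun _ => ν,
      Tendsto (fun n => truncation D E t n x) atTop (𝓝 (∏ e ∈ E, k e (x e.1) (x e.2))) := by
  have hsep : ∀ᵐ x ∂Measure.pi fun _ => ν, ∀ e ∈ E, ∀ᶠ n in atTop, D n (x e.1) ≠ D n (x e.2) :=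
    (eventually_all_finset E).2 fun e he => h.ae_eventually_ne (hE e he)
  filter_upwards [hsep] with x hx
  refine tendsto_finsetProd _ fun e he => tendsto_const_nhds.congr' ?_
  filter_upwards [hx e he] with n hn
  rw [h.kernel, if_neg hn]

theorem integrable_truncation (h : IsTreeCoding ν D t k) (n : ℕ) :
    Integrable (truncation D E t n) (Measure.pi fun _ => ν) :=
  (h.uniform n).integrable_pi_comp
    fun a => ∏ e ∈ E, extendKernel (t e) (treeKernel (t e) n) (a e.1) (a e.2)

variable [DecidableEq ι]

theorem integral_truncation [Nonempty R] [Nonempty A] (h : IsTreeCoding ν D t k) (n : ℕ) :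
    ∫ x, truncation D E t n x ∂(Measure.pi fun _ => ν) =
      partitionMean (Fintype.card R) (treeMean A E t n) univ :=
  ((h.uniform n).integral_pi_comp _).trans (expect_prod_eq_partitionMean E t n)

theorem integral_norm_truncation [Nonempty R] [Nonempty A] (h : IsTreeCoding ν D t k) (n : ℕ) :
    ∫ x, ‖truncation D E t n x‖ ∂(Measure.pi fun _ => ν) =
      partitionMean (Fintype.card R) (treeMean A E (fun e => ‖t e‖) n) univ := by
  simp only [truncation, norm_prod, norm_extendKernel, norm_treeKernel]
  exact ((h.uniform n).integral_pi_comp _).trans (expect_prod_eq_partitionMean E _ n)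

theorem integrable_prod_iff [Nontrivial R] [Nontrivial A] (h : IsTreeCoding ν D t k)
    (ht : ∀ e, t e ≠ 0) (hE : ∀ e ∈ E, e.1 ≠ e.2)
    (hcomplete : ∀ I : Finset ι, 1 < #I → (edgesIn E I).Nonempty) :
    Integrable (fun x => ∏ e ∈ E, k e (x e.1) (x e.2)) (Measure.pi fun _ => ν) ↔
      ∀ I : Finset ι, 1 < #I → 1 < ‖blockFactor A E t I‖ := by
  have hrec := isTreeRecursion_treeMean A hE hcomplete fun e => ‖t e‖
  have hpos (I : Finset ι) : 0 < blockFactor A E (fun e => ‖t e‖) I :=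
    div_pos (pow_pos (Nat.cast_pos.2 Fintype.card_pos) _)
      (prod_pos fun e _ => norm_pos_iff.2 (ht e))
  rw [integrable_iff_bddAbove_integral_norm (fun n => h.integrable_truncation n)
    (fun n => .of_forall (h.norm_truncation_le n)) (h.ae_tendsto_truncation hE)]
  simp only [h.integral_norm_truncation, norm_blockFactor]
  constructor
  · exact fun hb I hI => hrec.one_lt_of_bddAbove_partitionMean Fintype.one_lt_card hpos
      (treeMean_nonneg E fun e => norm_nonneg _) Fintype.one_lt_card hb (subset_univ I) hI
  · intro hC
    obtain ⟨V, -, -, hV⟩ := hrec.exists_tendsto fun I hI => (hC I hI).trans_le (le_abs_self _)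
    exact (tendsto_partitionMean _ hV).bddAbove_range

theorem exists_integral_prod_eq [Nonempty R] [Nontrivial A] (h : IsTreeCoding ν D t k)
    (hE : ∀ e ∈ E, e.1 ≠ e.2) (hcomplete : ∀ I : Finset ι, 1 < #I → (edgesIn E I).Nonempty)
    (hk : Integrable (fun x => ∏ e ∈ E, k e (x e.1) (x e.2)) (Measure.pi fun _ => ν))
    (hC : ∀ I : Finset ι, 1 < #I → 1 < ‖blockFactor A E t I‖) :
    ∃ V : Finset ι → 𝕜, (∀ i, V {i} = 1) ∧
      (∀ I, 1 < #I → V I = splitSum (Fintype.card A) V I / (blockFactor A E t I - 1)) ∧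
      ∫ x, ∏ e ∈ E, k e (x e.1) (x e.2) ∂(Measure.pi fun _ => ν) =
        partitionMean (Fintype.card R) V univ := by
  obtain ⟨V, hV₁, hV, hlim⟩ := (isTreeRecursion_treeMean A hE hcomplete t).exists_tendsto hC
  have hconv := tendsto_integral_of_dominated_convergence _
    (fun n => (h.integrable_truncation (E := E) n).aestronglyMeasurable) hk.norm
    (fun n => .of_forall (h.norm_truncation_le n)) (h.ae_tendsto_truncation hE)
  simp only [h.integral_truncation] at hconv
  exact ⟨V, hV₁, hV, tendsto_nhds_unique hconv (tendsto_partitionMean _ hlim)⟩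

end IsTreeCoding

end TreeCodings

section Digits

open Finset

variable {R A Y Ω K : Type*}

/-- The first `n` letters of a point of a set `Y` that is identified with `A × Y`. -/
def digits (φ : A × Y ≃ Y) : (n : ℕ) → Y → Fin n → A
  | 0, _ => Fin.elim0
  | n + 1, y => Fin.cons (φ.symm y).1 (digits φ n (φ.symm y).2)

/-- The letter in `R` and the first `n` letters in `A` of a point of a set that is identified with
`R × Y`, where `Y` is identified with `A × Y`. -/
def code (χ : R × Y ≃ Ω) (φ : A × Y ≃ Y) (n : ℕ) (ξ : Ω) : R × (Fin n → A) :=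
  Prod.map id (digits φ n) (χ.symm ξ)

variable (χ : R × Y ≃ Ω) (φ : A × Y ≃ Y)

theorem digits_succ_eq_iff (n : ℕ) (x y : Y) : digits φ (n + 1) x = digits φ (n + 1) y ↔
    (φ.symm x).1 = (φ.symm y).1 ∧ digits φ n (φ.symm x).2 = digits φ n (φ.symm y).2 :=
  Fin.cons_inj

theorem code_eq_iff (n : ℕ) (ξ η : Ω) : code χ φ n ξ = code χ φ n η ↔
    (χ.symm ξ).1 = (χ.symm η).1 ∧ digits φ n (χ.symm ξ).2 = digits φ n (χ.symm η).2 :=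
  Prod.ext_iff

theorem digits_eq_of_succ {n : ℕ} {x y : Y} (h : digits φ (n + 1) x = digits φ (n + 1) y) :
    digits φ n x = digits φ n y := by
  induction n generalizing x y with
  | zero => rfl
  | succ n ih =>
    rw [digits_succ_eq_iff] at h ⊢
    exact h.imp_right ih

theorem code_eq_of_succ {n : ℕ} {ξ η : Ω} (h : code χ φ (n + 1) ξ = code χ φ (n + 1) η) :
    code χ φ n ξ = code χ φ n η := by
  rw [code_eq_iff] at h ⊢
  exact h.imp_right (digits_eq_of_succ φ)

theorem digits_surjective [Nonempty Y] (n : ℕ) : Function.Surjective (digits φ n) := by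
  induction n with
  | zero => exact fun w => ⟨Classical.arbitrary Y, Subsingleton.elim _ _⟩
  | succ n ih =>
    intro w
    obtain ⟨y, hy⟩ := ih (Fin.tail w)
    exact ⟨φ (w 0, y), by rw [digits, φ.symm_apply_apply, hy, Fin.cons_self_tail]⟩

theorem code_surjective [Nonempty Y] (n : ℕ) : Function.Surjective (code χ φ n) :=
  (Function.surjective_id.prodMap (digits_surjective φ n)).comp χ.symm.surjective

variable [DecidableEq R] [DecidableEq A]

section Kernels

variable [Field K] {t : K} {k : Y → Y → K}

theorem treeKernel_digits (hk : ∀ c c', k (φ c) (φ c') = extendKernel t k c c') (n : ℕ)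
    (x y : Y) : treeKernel t n (digits φ n x) (digits φ n y) =
      if digits φ n x = digits φ n y then 0 else k x y := by
  induction n generalizing x y with
  | zero => exact (if_pos rfl).symm
  | succ n ih =>
    have hxy : k x y = extendKernel t k (φ.symm x) (φ.symm y) := by
      rw [← hk, φ.apply_symm_apply, φ.apply_symm_apply]
    rw [hxy, if_congr (digits_succ_eq_iff φ n x y) rfl rfl]
    simp only [treeKernel, extendKernel, digits, Fin.cons_zero, Fin.tail_cons, ih]
    split_ifs <;> simp_all

theorem extendKernel_code {κ : Ω → Ω → K} (hk : ∀ c c', k (φ c) (φ c') = extendKernel t k c c')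
    (hκ : ∀ c c', κ (χ c) (χ c') = extendKernel t k c c') (n : ℕ) (ξ η : Ω) :
    extendKernel t (treeKernel t n) (code χ φ n ξ) (code χ φ n η) =
      if code χ φ n ξ = code χ φ n η then 0 else κ ξ η := by
  have hξη : κ ξ η = extendKernel t k (χ.symm ξ) (χ.symm η) := by
    rw [← hκ, χ.apply_symm_apply, χ.apply_symm_apply]
  rw [hξη, if_congr (code_eq_iff χ φ n ξ η) rfl rfl]
  simp only [extendKernel, code, Prod.map_fst, Prod.map_snd, id, treeKernel_digits φ hk]
  split_ifs <;> simp_all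

end Kernels

section Balls

variable {r : ℝ} {d : Y → Y → ℝ}

theorem extendKernel_le_pow_iff (hr₀ : 0 < r) (hr₁ : r < 1) (n : ℕ) (c c' : R × Y) :
    extendKernel r d c c' ≤ r ^ (n + 1) ↔ c.1 = c'.1 ∧ d c.2 c'.2 ≤ r ^ n := by
  unfold extendKernel
  split_ifs with h
  · rw [pow_succ', mul_le_mul_iff_right₀ hr₀]
    exact (and_iff_right h).symm
  · exact iff_of_false (pow_lt_one₀ hr₀.le hr₁ n.succ_ne_zero).not_ge fun hc => h hc.1

theorem digits_eq_iff_le_pow (hr₀ : 0 < r) (hr₁ : r < 1) (hd₁ : ∀ x y, d x y ≤ 1)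
    (hd : ∀ c c', d (φ c) (φ c') = extendKernel r d c c') (n : ℕ) (x y : Y) :
    digits φ n x = digits φ n y ↔ d x y ≤ r ^ n := by
  induction n generalizing x y with
  | zero => exact iff_of_true rfl (hd₁ x y)
  | succ n ih =>
    rw [digits_succ_eq_iff, ih, ← extendKernel_le_pow_iff hr₀ hr₁, ← hd, φ.apply_symm_apply,
      φ.apply_symm_apply]

theorem code_eq_iff_le_pow {δ : Ω → Ω → ℝ} (hr₀ : 0 < r) (hr₁ : r < 1) (hd₁ : ∀ x y, d x y ≤ 1)
    (hd : ∀ c c', d (φ c) (φ c') = extendKernel r d c c')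
    (hδ : ∀ c c', δ (χ c) (χ c') = extendKernel r d c c') (n : ℕ) (ξ η : Ω) :
    code χ φ n ξ = code χ φ n η ↔ δ ξ η ≤ r ^ (n + 1) := by
  rw [code_eq_iff, digits_eq_iff_le_pow φ hr₀ hr₁ hd₁ hd, ← extendKernel_le_pow_iff hr₀ hr₁, ← hδ,
    χ.apply_symm_apply, χ.apply_symm_apply]

end Balls

theorem extendKernel_eq_zero_iff [Field K] {t : K} (ht : t ≠ 0) {k : Y → Y → K} {c c' : R × Y} :
    extendKernel t k c c' = 0 ↔ c.1 = c'.1 ∧ k c.2 c'.2 = 0 := by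
  unfold extendKernel
  split_ifs with h <;> simp [h, ht]

theorem ofReal_extendKernel_cpow {t : ℝ} (ht : 0 ≤ t) {d : Y → Y → ℝ} (hd : ∀ x y, 0 ≤ d x y)
    (z : ℂ) (c c' : R × Y) : ((extendKernel t d c c' : ℝ) : ℂ) ^ z =
      extendKernel ((t : ℂ) ^ z) (fun x y => (d x y : ℂ) ^ z) c c' := by
  unfold extendKernel
  split_ifs
  · rw [Complex.ofReal_mul, Complex.mul_cpow_ofReal_nonneg ht (hd _ _)]
  · rw [Complex.ofReal_one, Complex.one_cpow]

end Digits

section PadicDigits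

variable (p : ℕ) [Fact p.Prime]

theorem norm_sub_lt_one_iff_toZMod_eq {x y : ℤ_[p]} :
    ‖x - y‖ < 1 ↔ PadicInt.toZMod x = PadicInt.toZMod y := by
  rw [PadicInt.norm_lt_one_iff_dvd, ← Ideal.mem_span_singleton, ← PadicInt.maximalIdeal_eq_span_p,
    ← PadicInt.ker_toZMod, RingHom.sub_mem_ker_iff]

/-- The `p`-adic integer with lowest digit `c.1` and remaining digits those of `c.2`. -/
noncomputable def consDigit (c : ZMod p × ℤ_[p]) : ℤ_[p] := c.1.val + p * c.2

theorem toZMod_consDigit (c : ZMod p × ℤ_[p]) : PadicInt.toZMod (consDigit p c) = c.1 := by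
  rw [consDigit, map_add, map_mul, map_natCast, map_natCast, ZMod.natCast_zmod_val,
    CharP.cast_eq_zero, zero_mul, add_zero]

theorem norm_consDigit_sub (c c' : ZMod p × ℤ_[p]) : ‖consDigit p c - consDigit p c'‖ =
    extendKernel (p : ℝ)⁻¹ (fun x y => ‖x - y‖) c c' := by
  unfold extendKernel
  split_ifs with h
  · rw [consDigit, consDigit, h, add_sub_add_left_eq_sub, ← mul_sub, norm_mul, PadicInt.norm_p]
  · refine (PadicInt.norm_le_one _).eq_of_not_lt fun hlt => h ?_
    simpa only [toZMod_consDigit] using (norm_sub_lt_one_iff_toZMod_eq p).1 hlt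

theorem consDigit_bijective : Function.Bijective (consDigit p) := by
  constructor
  · intro c c' h
    have hzero := norm_consDigit_sub p c c'
    rw [h, sub_self, norm_zero, eq_comm, extendKernel_eq_zero_iff
      (inv_ne_zero (NeZero.ne (p : ℝ))), norm_sub_eq_zero_iff] at hzero
    exact Prod.ext hzero.1 hzero.2
  · intro x
    obtain ⟨y, hy⟩ : (p : ℤ_[p]) ∣ x - (PadicInt.toZMod x).val := by
      rw [← PadicInt.norm_lt_one_iff_dvd, norm_sub_lt_one_iff_toZMod_eq, map_natCast,
        ZMod.natCast_zmod_val]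
    exact ⟨(PadicInt.toZMod x, y), by rw [consDigit, ← hy, add_sub_cancel]⟩

/-- The identification of `ℤ_p` with `𝔽_p × ℤ_p` that splits off the lowest digit. -/
noncomputable def digitEquiv : ZMod p × ℤ_[p] ≃ ℤ_[p] := Equiv.ofBijective _ (consDigit_bijective p)

end PadicDigits

section ProjectiveLine

open Matrix

theorem norm_mulVec_le {m n K : Type*} [Fintype m] [Fintype n] [NormedField K]
    [IsUltrametricDist K] {A : Matrix m n K} (hA : ∀ i j, ‖A i j‖ ≤ 1) (v : n → K) :
    ‖A *ᵥ v‖ ≤ ‖v‖ := by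
  refine (pi_norm_le_iff_of_nonneg (norm_nonneg v)).2 fun i =>
    IsUltrametricDist.norm_sum_le_of_forall_le_of_nonneg (norm_nonneg v) fun j _ => ?_
  rw [norm_mul]
  exact (mul_le_of_le_one_left (norm_nonneg _) (hA i j)).trans (norm_le_pi_norm v j)

/-- Membership in `GL₂` of the closed unit ball of `K`, which is `GL₂(ℤ_p)` for `K = ℚ_p`; it is
phrased as in `IsGLInvariant`. -/
structure IsIntegralGL {K : Type*} [NormedField K] (A : Matrix (Fin 2) (Fin 2) K) : Prop where
  norm_apply_le_one : ∀ i j, ‖A i j‖ ≤ 1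
  norm_det : ‖A.det‖ = 1

namespace IsIntegralGL

variable {K : Type*} [NormedField K] {A : Matrix (Fin 2) (Fin 2) K}

theorem adjugate (hA : IsIntegralGL A) : IsIntegralGL A.adjugate where
  norm_apply_le_one := by
    simp only [adjugate_fin_two, Fin.forall_fin_two, of_apply, cons_val', cons_val_zero,
      cons_val_one, cons_val_fin_one, norm_neg]
    exact ⟨⟨hA.1 1 1, hA.1 0 1⟩, hA.1 1 0, hA.1 0 0⟩
  norm_det := by
    rw [det_adjugate, Fintype.card_fin, pow_one, hA.norm_det]

theorem norm_mulVec [IsUltrametricDist K] (hA : IsIntegralGL A) (v : Fin 2 → K) :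
    ‖A *ᵥ v‖ = ‖v‖ := by
  refine (norm_mulVec_le hA.norm_apply_le_one v).antisymm ?_
  calc ‖v‖ = ‖A.det • v‖ := by rw [norm_smul, hA.norm_det, one_mul]
    _ = ‖A.adjugate *ᵥ (A *ᵥ v)‖ := by rw [mulVec_mulVec, adjugate_mul, smul_mulVec, one_mulVec]
    _ ≤ ‖A *ᵥ v‖ := norm_mulVec_le hA.adjugate.norm_apply_le_one _

theorem mulVec_ne_zero [IsUltrametricDist K] (hA : IsIntegralGL A) {v : Fin 2 → K} (hv : v ≠ 0) :
    A *ᵥ v ≠ 0 := by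
  rwa [← norm_ne_zero_iff, hA.norm_mulVec, norm_ne_zero_iff]

end IsIntegralGL

theorem pi_norm_eq_max {K : Type*} [SeminormedAddGroup K] (v : Fin 2 → K) :
    ‖v‖ = max ‖v 0‖ ‖v 1‖ := by
  refine le_antisymm ((pi_norm_le_iff_of_nonneg (le_max_of_le_left (norm_nonneg _))).2 ?_)
    (max_le (norm_le_pi_norm v 0) (norm_le_pi_norm v 1))
  exact Fin.forall_fin_two.2 ⟨le_max_left _ _, le_max_right _ _⟩

section SphericalMetric

variable (p : ℕ) [Fact p.Prime]

theorem sdelta_eq_div_norm (v w : Fin 2 → ℚ_[p]) :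
    sdelta p v w = ‖v 0 * w 1 - v 1 * w 0‖ / (‖v‖ * ‖w‖) := by
  rw [sdelta, pi_norm_eq_max, pi_norm_eq_max]

theorem sdelta_smul {a b : ℚ_[p]} (ha : a ≠ 0) (hb : b ≠ 0) (v w : Fin 2 → ℚ_[p]) :
    sdelta p (a • v) (b • w) = sdelta p v w := by
  have hwedge : (a • v) 0 * (b • w) 1 - (a • v) 1 * (b • w) 0 =
      a * b * (v 0 * w 1 - v 1 * w 0) := by
    simp only [Pi.smul_apply, smul_eq_mul]
    ring
  rw [sdelta_eq_div_norm, sdelta_eq_div_norm, hwedge, norm_mul, norm_mul, norm_smul, norm_smul,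
    mul_mul_mul_comm, mul_div_mul_left _ _
      (mul_ne_zero (norm_ne_zero_iff.2 ha) (norm_ne_zero_iff.2 hb))]

theorem sdelta_mulVec {A : Matrix (Fin 2) (Fin 2) ℚ_[p]} (hA : IsIntegralGL A)
    (v w : Fin 2 → ℚ_[p]) : sdelta p (A *ᵥ v) (A *ᵥ w) = sdelta p v w := by
  have hwedge : (A *ᵥ v) 0 * (A *ᵥ w) 1 - (A *ᵥ v) 1 * (A *ᵥ w) 0 =
      A.det * (v 0 * w 1 - v 1 * w 0) := by
    simp only [mulVec, dotProduct, Fin.sum_univ_two, det_fin_two]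
    ring
  rw [sdelta_eq_div_norm, sdelta_eq_div_norm, hwedge, norm_mul, hA.norm_det, one_mul,
    hA.norm_mulVec, hA.norm_mulVec]

theorem pdelta_mk {v w : Fin 2 → ℚ_[p]} (hv : v ≠ 0) (hw : w ≠ 0) :
    pdelta p (.mk ℚ_[p] v hv) (.mk ℚ_[p] w hw) = sdelta p v w := by
  obtain ⟨a, ha⟩ := Projectivization.exists_smul_eq_mk_rep ℚ_[p] v hv
  obtain ⟨b, hb⟩ := Projectivization.exists_smul_eq_mk_rep ℚ_[p] w hw
  rw [pdelta, ← ha, ← hb]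
  exact sdelta_smul p a.ne_zero b.ne_zero v w

theorem mobius_mk {A : Matrix (Fin 2) (Fin 2) ℚ_[p]} (hA : IsIntegralGL A) {v : Fin 2 → ℚ_[p]}
    (hv : v ≠ 0) :
    mobius p A (.mk ℚ_[p] v hv) = .mk ℚ_[p] (A *ᵥ v) (hA.mulVec_ne_zero hv) := by
  obtain ⟨a, ha⟩ := Projectivization.exists_smul_eq_mk_rep ℚ_[p] v hv
  rw [mobius, dif_pos (hA.mulVec_ne_zero (Projectivization.rep_nonzero _)),
    Projectivization.mk_eq_mk_iff]
  exact ⟨a, by rw [← ha, Units.smul_def, Units.smul_def, mulVec_smul]⟩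

theorem pdelta_mobius {A : Matrix (Fin 2) (Fin 2) ℚ_[p]} (hA : IsIntegralGL A) (ξ η : P1 p) :
    pdelta p (mobius p A ξ) (mobius p A η) = pdelta p ξ η := by
  induction ξ using Projectivization.ind with | h v hv
  induction η using Projectivization.ind with | h w hw
  rw [mobius_mk p hA, mobius_mk p hA, pdelta_mk, pdelta_mk, sdelta_mulVec p hA]

theorem mobius_surjective {A : Matrix (Fin 2) (Fin 2) ℚ_[p]} (hA : IsIntegralGL A) :
    Function.Surjective (mobius p A) := by
  intro ξ
  induction ξ using Projectivization.ind with | h v hv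
  refine ⟨.mk ℚ_[p] (A.adjugate *ᵥ v) (hA.adjugate.mulVec_ne_zero hv), ?_⟩
  rw [mobius_mk p hA, Projectivization.mk_eq_mk_iff']
  exact ⟨A.det, by rw [mulVec_mulVec, mul_adjugate, smul_mulVec, one_mulVec]⟩

theorem isClosed_setOf_pdelta_le (ξ : P1 p) (r : ℝ) : IsClosed {η | pdelta p ξ η ≤ r} := by
  have hquot : Topology.IsQuotientMap
      (fun v : {v : Fin 2 → ℚ_[p] // v ≠ 0} => (.mk ℚ_[p] v.1 v.2 : P1 p)) :=
    isQuotientMap_quotient_mk'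
  have hpre : (fun v : {v : Fin 2 → ℚ_[p] // v ≠ 0} => (.mk ℚ_[p] v.1 v.2 : P1 p)) ⁻¹'
      {η | pdelta p ξ η ≤ r} = {v | sdelta p ξ.rep v.1 ≤ r} := by
    ext v
    rw [Set.mem_preimage, Set.mem_ofPred_eq, Set.mem_ofPred_eq, ← pdelta_mk p ξ.rep_nonzero v.2,
      ξ.mk_rep]
  rw [← hquot.isClosed_preimage, hpre]
  simp only [sdelta_eq_div_norm]
  have hcoord (i : Fin 2) : Continuous fun v : {v : Fin 2 → ℚ_[p] // v ≠ 0} => v.1 i :=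
    (continuous_apply i).comp continuous_subtype_val
  refine isClosed_le (.div ?_ (by fun_prop) fun v => ?_) continuous_const
  · exact ((continuous_const.mul (hcoord 1)).sub (continuous_const.mul (hcoord 0))).norm
  · exact mul_ne_zero (norm_ne_zero_iff.2 ξ.rep_nonzero) (norm_ne_zero_iff.2 v.2)

end SphericalMetric

theorem IsGLInvariant.measure_setOf_pdelta_mobius_le {p : ℕ} [Fact p.Prime] {ν : Measure (P1 p)}
    (hν : IsGLInvariant p ν) {A : Matrix (Fin 2) (Fin 2) ℚ_[p]} (hA : IsIntegralGL A) (ξ : P1 p)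
    (r : ℝ) : ν {η | pdelta p (mobius p A ξ) η ≤ r} = ν {η | pdelta p ξ η ≤ r} := by
  have hball : mobius p A '' {η | pdelta p ξ η ≤ r} = {η | pdelta p (mobius p A ξ) η ≤ r} := by
    simp only [← pdelta_mobius p hA ξ]
    exact Set.image_preimage_eq {η | pdelta p (mobius p A ξ) η ≤ r} (mobius_surjective p hA)
  rw [← hball]
  exact hν A hA.norm_apply_le_one hA.norm_det _ (isClosed_setOf_pdelta_le p ξ r).measurableSet

section Charts

variable (p : ℕ) [Fact p.Prime]

/-- The points `[x : 1]` and `[1 : p y]` with `x, y ∈ ℤ_p` make up the projective line; this is the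
homogeneous coordinate vector of the point given by `y = c.2` if `c.1 = none`, and by the `x` with
lowest digit `a` and remaining digits `c.2` if `c.1 = some a`. -/
noncomputable def chartVector : Option (ZMod p) × ℤ_[p] → Fin 2 → ℚ_[p]
  | (some a, u) => ![(consDigit p (a, u) : ℤ_[p]), 1]
  | (none, u) => ![1, (p * u : ℤ_[p])]

theorem norm_chartVector (c : Option (ZMod p) × ℤ_[p]) : ‖chartVector p c‖ = 1 := by
  rw [pi_norm_eq_max]
  rcases c with ⟨_ | a, u⟩
  · exact (congrArg (max · _) norm_one).trans (max_eq_left (PadicInt.norm_le_one _))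
  · exact (congrArg (max _) norm_one).trans (max_eq_right (PadicInt.norm_le_one _))

theorem chartVector_ne_zero (c : Option (ZMod p) × ℤ_[p]) : chartVector p c ≠ 0 :=
  norm_ne_zero_iff.1 ((norm_chartVector p c).trans_ne one_ne_zero)

theorem norm_one_sub_p_mul (u : ℤ_[p]) : ‖1 - p * u‖ = 1 := by
  have hlt : ‖(p : ℤ_[p]) * u‖ < 1 := (PadicInt.norm_lt_one_iff_dvd _).2 (dvd_mul_right _ _)
  rw [sub_eq_add_neg, PadicInt.norm_add_eq_max_of_ne] <;> rw [norm_one, norm_neg]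
  · exact max_eq_left hlt.le
  · exact hlt.ne'

theorem sdelta_chartVector (c c' : Option (ZMod p) × ℤ_[p]) :
    sdelta p (chartVector p c) (chartVector p c') =
      extendKernel (p : ℝ)⁻¹ (fun x y => ‖x - y‖) c c' := by
  rw [sdelta_eq_div_norm, norm_chartVector, norm_chartVector, mul_one, div_one]
  rcases c with ⟨_ | a, u⟩ <;> rcases c' with ⟨_ | b, v⟩ <;>
    simp only [chartVector, Matrix.cons_val_zero, Matrix.cons_val_one] <;> norm_cast <;>
    rw [← PadicInt.norm_def]
  · rw [extendKernel, if_pos rfl, one_mul, mul_one, ← mul_sub, norm_mul, PadicInt.norm_p,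
      norm_sub_rev]
  · rw [extendKernel, if_neg (Option.some_ne_none b).symm, one_mul, mul_assoc]
    exact norm_one_sub_p_mul p _
  · rw [extendKernel, if_neg (Option.some_ne_none a), one_mul, norm_sub_rev, mul_left_comm]
    exact norm_one_sub_p_mul p _
  · rw [mul_one, one_mul]
    exact (norm_consDigit_sub p (a, u) (b, v)).trans (by simp only [extendKernel, Option.some_inj])

/-- The parametrization of `ℙ¹(ℚ_p)` by `p + 1` copies of `ℤ_p`, one for each point of
`ℙ¹(𝔽_p)`. -/
noncomputable def chart (c : Option (ZMod p) × ℤ_[p]) : P1 p :=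
  .mk ℚ_[p] (chartVector p c) (chartVector_ne_zero p c)

theorem pdelta_chart (c c' : Option (ZMod p) × ℤ_[p]) :
    pdelta p (chart p c) (chart p c') = extendKernel (p : ℝ)⁻¹ (fun x y => ‖x - y‖) c c' :=
  (pdelta_mk p _ _).trans (sdelta_chartVector p c c')

theorem chart_injective : Function.Injective (chart p) := by
  intro c c' h
  have hself : pdelta p (chart p c') (chart p c') = 0 := by
    simp only [pdelta_chart, extendKernel, sub_self, norm_zero, mul_zero, if_true]
  rw [← congrArg (pdelta p · _) h, pdelta_chart, extendKernel_eq_zero_iff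
    (inv_ne_zero (NeZero.ne (p : ℝ))), norm_sub_eq_zero_iff] at hself
  exact Prod.ext hself.1 hself.2

theorem exists_padicInt_eq_div {a b : ℚ_[p]} (h : ‖a‖ ≤ ‖b‖) : ∃ x : ℤ_[p], (x : ℚ_[p]) = a / b :=
  ⟨⟨a / b, (norm_div a b).trans_le (div_le_one_of_le₀ h (norm_nonneg b))⟩, rfl⟩

theorem chart_surjective : Function.Surjective (chart p) := by
  intro ξ
  induction ξ using Projectivization.ind with | h v hv
  rcases le_or_gt ‖v 0‖ ‖v 1‖ with hle | hlt
  · have hv₁ : v 1 ≠ 0 := by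
      rwa [← norm_ne_zero_iff, ← max_eq_right hle, ← pi_norm_eq_max, norm_ne_zero_iff]
    obtain ⟨x, hx⟩ := exists_padicInt_eq_div p hle
    obtain ⟨⟨a, u⟩, rfl⟩ := (consDigit_bijective p).surjective x
    refine ⟨(some a, u), (Projectivization.mk_eq_mk_iff' ..).2 ⟨(v 1)⁻¹, ?_⟩⟩
    simp only [chartVector, hx, funext_iff, Fin.forall_fin_two]
    exact ⟨(div_eq_inv_mul _ _).symm, inv_mul_cancel₀ hv₁⟩
  · have hv₀ : v 0 ≠ 0 := norm_pos_iff.1 ((norm_nonneg _).trans_lt hlt)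
    obtain ⟨y, hy⟩ := exists_padicInt_eq_div p hlt.le
    have hy₁ : ‖y‖ < 1 := by
      rw [PadicInt.norm_def, hy, norm_div]
      exact (div_lt_one (norm_pos_iff.2 hv₀)).2 hlt
    obtain ⟨u, rfl⟩ := (PadicInt.norm_lt_one_iff_dvd _).1 hy₁
    refine ⟨(none, u), (Projectivization.mk_eq_mk_iff' ..).2 ⟨(v 0)⁻¹, ?_⟩⟩
    simp only [chartVector, hy, funext_iff, Fin.forall_fin_two]
    exact ⟨inv_mul_cancel₀ hv₀, (div_eq_inv_mul _ _).symm⟩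

/-- The identification of `ℙ¹(ℚ_p)` with `ℙ¹(𝔽_p) × ℤ_p` given by `chart`. -/
noncomputable def chartEquiv : Option (ZMod p) × ℤ_[p] ≃ P1 p :=
  .ofBijective _ ⟨chart_injective p, chart_surjective p⟩

theorem exists_mobius_iota_zero_eq (ξ : P1 p) :
    ∃ A, IsIntegralGL A ∧ mobius p A (iota p 0) = ξ := by
  obtain ⟨c, rfl⟩ := chart_surjective p ξ
  suffices h : ∃ A, IsIntegralGL A ∧ A *ᵥ ![0, 1] = chartVector p c by
    obtain ⟨A, hA, hAc⟩ := h
    exact ⟨A, hA, by simp only [iota, mobius_mk p hA, hAc, chart]⟩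
  rcases c with ⟨_ | a, u⟩
  · simp only [chartVector]
    generalize (p * u : ℤ_[p]) = y
    refine ⟨!![0, 1; 1, y], ⟨?_, ?_⟩, ?_⟩
    · simp [Fin.forall_fin_two, PadicInt.norm_le_one]
    · simp [det_fin_two]
    · simp [funext_iff, Fin.forall_fin_two]
  · simp only [chartVector]
    generalize consDigit p (a, u) = x
    refine ⟨!![1, x; 0, 1], ⟨?_, ?_⟩, ?_⟩
    · simp [Fin.forall_fin_two, PadicInt.norm_le_one]
    · simp [det_fin_two]
    · simp [funext_iff, Fin.forall_fin_two]

end Charts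

end ProjectiveLine

section ProjectiveCoding

variable (p : ℕ) [Fact p.Prime]

theorem code_preimage_singleton (n : ℕ) (ξ : P1 p) :
    code (chartEquiv p) (digitEquiv p) n ⁻¹' {code (chartEquiv p) (digitEquiv p) n ξ} =
      {η | pdelta p ξ η ≤ (p : ℝ)⁻¹ ^ (n + 1)} := by
  have hp : (1 : ℝ) < p := Nat.one_lt_cast.2 (Fact.out : p.Prime).one_lt
  have hcode := code_eq_iff_le_pow (δ := pdelta p) (chartEquiv p) (digitEquiv p)
    (inv_pos.2 (one_pos.trans hp)) (inv_lt_one_of_one_lt₀ hp)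
    (fun x y => PadicInt.norm_le_one (x - y)) (norm_consDigit_sub p) (pdelta_chart p) n ξ
  exact Set.ext fun η => eq_comm.trans (hcode η)

theorem isUniformCoding_code {ν : Measure (P1 p)} [IsProbabilityMeasure ν]
    (hν : IsGLInvariant p ν) (n : ℕ) :
    IsUniformCoding ν (code (chartEquiv p) (digitEquiv p) n) := by
  have hball (ξ : P1 p) (r : ℝ) : ν {η | pdelta p ξ η ≤ r} = ν {η | pdelta p (iota p 0) η ≤ r} := by
    obtain ⟨A, hA, rfl⟩ := exists_mobius_iota_zero_eq p ξ
    exact hν.measure_setOf_pdelta_mobius_le hA _ r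
  refine .of_measure_preimage_eq ?_ ?_ <;>
    simp only [(code_surjective (chartEquiv p) (digitEquiv p) n).forall, code_preimage_singleton]
  · exact fun ξ => (isClosed_setOf_pdelta_le p ξ _).measurableSet
  · exact fun ξ η => (hball ξ _).trans (hball η _).symm

theorem isTreeCoding_code {ν : Measure (P1 p)} [IsProbabilityMeasure ν] (hν : IsGLInvariant p ν)
    {ι : Type*} (s : ι × ι → ℂ) :
    IsTreeCoding ν (code (chartEquiv p) (digitEquiv p)) (fun e => (((p : ℝ)⁻¹ : ℝ) : ℂ) ^ s e)
      fun e ξ η => (pdelta p ξ η : ℂ) ^ s e where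
  uniform := isUniformCoding_code p hν
  refines _ _ _ := code_eq_of_succ _ _
  kernel e := by
    have hp : (0 : ℝ) ≤ (p : ℝ)⁻¹ := by positivity
    have hcpow {R : Type} [DecidableEq R] (c c' : R × ℤ_[p]) := ofReal_extendKernel_cpow hp
      (fun x y : ℤ_[p] => norm_nonneg (x - y)) (s e) c c'
    refine extendKernel_code _ _ (k := fun x y => (‖x - y‖ : ℂ) ^ s e) (fun c c' => ?_)
      fun c c' => ?_
    · rw [← hcpow, ← norm_consDigit_sub]
      rfl
    · rw [← hcpow, ← pdelta_chart]
      rfl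

end ProjectiveCoding

section LogCoulombGas

open Finset

variable (p : ℕ) [Fact p.Prime] {N : ℕ} (s : Fin N → Fin N → ℂ)

theorem edgesIn_pairs_nonempty {I : Finset (Fin N)} (hI : 1 < #I) :
    (edgesIn (pairs N) I).Nonempty := by
  obtain ⟨i, hi, j, hj, hij⟩ := one_lt_card.1 hI
  rcases hij.lt_or_gt with h | h
  · exact ⟨(i, j), by simp [edgesIn, pairs, hi, hj, h]⟩
  · exact ⟨(j, i), by simp [edgesIn, pairs, hi, hj, h]⟩

theorem ne_of_mem_pairs {e : Fin N × Fin N} (he : e ∈ pairs N) : e.1 ≠ e.2 :=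
  (mem_filter.1 he).2.ne

theorem prod_const_cpow {ι : Type*} {x : ℂ} (hx : x ≠ 0) (I : Finset ι) (f : ι → ℂ) :
    ∏ i ∈ I, x ^ f i = x ^ ∑ i ∈ I, f i := by
  simp only [Complex.cpow_def_of_ne_zero hx, mul_sum, Complex.exp_sum]

theorem blockFactor_pairs {I : Finset (Fin N)} (hI : I.Nonempty) :
    blockFactor (ZMod p) (pairs N) (fun e => (((p : ℝ)⁻¹ : ℝ) : ℂ) ^ s e.1 e.2) I =
      (p : ℂ) ^ eexp I s := by
  have hp : (p : ℂ) ≠ 0 := NeZero.ne _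
  have hcpow (z : ℂ) : (((p : ℝ)⁻¹ : ℝ) : ℂ) ^ z = (p : ℂ) ^ (-z) := by
    rw [Complex.ofReal_inv, Complex.ofReal_natCast, Complex.cpow_neg, Complex.inv_cpow]
    exact Complex.natCast_arg.trans_ne Real.pi_ne_zero.symm
  have hcard : (#I : ℂ) - 1 = (#I - 1 : ℕ) := by
    rw [Nat.cast_sub hI.card_pos, Nat.cast_one]
  simp only [blockFactor, hcpow, ZMod.card]
  rw [prod_const_cpow hp, sum_neg_distrib, Complex.cpow_neg, div_inv_eq_mul, eexp, hcard,
    Complex.cpow_add _ _ hp, Complex.cpow_natCast]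
  rfl

theorem one_lt_norm_natCast_cpow_iff (z : ℂ) : 1 < ‖(p : ℂ) ^ z‖ ↔ 0 < z.re := by
  have hp := (Fact.out : p.Prime)
  rw [Complex.norm_natCast_cpow_of_pos hp.pos]
  have hp₁ : (1 : ℝ) < p := Nat.one_lt_cast.2 hp.one_lt
  rw [← Real.rpow_zero (p : ℝ), Real.rpow_lt_rpow_left_iff hp₁]

theorem inOmega_univ_iff_one_lt_norm_blockFactor : InOmega univ s ↔ ∀ I, 1 < #I →
    1 < ‖blockFactor (ZMod p) (pairs N) (fun e => (((p : ℝ)⁻¹ : ℝ) : ℂ) ^ s e.1 e.2) I‖ := by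
  have hfactor {I : Finset (Fin N)} (hI : 1 < #I) :=
    blockFactor_pairs p s (card_pos.1 (zero_lt_one.trans hI))
  constructor
  · intro h I hI
    rw [hfactor hI, one_lt_norm_natCast_cpow_iff]
    exact h I (subset_univ I) hI
  · intro h I _ hI
    rw [← one_lt_norm_natCast_cpow_iff p, ← hfactor hI]
    exact h I hI

theorem natCast_mul_cpow_eexp_univ : (p : ℂ) * (p : ℂ) ^ eexp univ s =
    (p : ℂ) ^ ((N : ℂ) + ∑ q ∈ pairs N, s q.1 q.2) := by
  have hexp : (N : ℂ) + ∑ q ∈ pairs N, s q.1 q.2 = 1 + eexp univ s := by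
    simp only [eexp, mem_univ, and_self, filter_true, card_fin]
    ring
  rw [hexp, Complex.cpow_add _ _ (NeZero.ne _), Complex.cpow_one]

variable {ν : Measure (P1 p)} [IsProbabilityMeasure ν]

theorem integrable_prod_pdelta_iff (hν : IsGLInvariant p ν) :
    Integrable (fun x : Fin N → P1 p =>
      ∏ q ∈ pairs N, ((pdelta p (x q.1) (x q.2) : ℝ) : ℂ) ^ s q.1 q.2)
      (Measure.pi fun _ => ν) ↔ InOmega univ s := by
  have hp : (((p : ℝ)⁻¹ : ℝ) : ℂ) ≠ 0 := by simp [NeZero.ne p]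
  exact ((isTreeCoding_code p hν fun e => s e.1 e.2).integrable_prod_iff
    (fun e => Complex.cpow_ne_zero_iff.2 (.inl hp)) (fun _ => ne_of_mem_pairs)
    fun _ => edgesIn_pairs_nonempty).trans (inOmega_univ_iff_one_lt_norm_blockFactor p s).symm

theorem exists_ZP1s_eq_partitionMean (hν : IsGLInvariant p ν) (hs : InOmega univ s) :
    ∃ V : Finset (Fin N) → ℂ, (∀ i, V {i} = 1) ∧
      (∀ I, 1 < #I → V I = splitSum p V I / ((p : ℂ) ^ eexp I s - 1)) ∧
      ZP1s p ν N s = partitionMean (p + 1) V univ := by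
  obtain ⟨V, hV₁, hV, hZ⟩ := (isTreeCoding_code p hν fun e => s e.1 e.2).exists_integral_prod_eq
    (fun _ => ne_of_mem_pairs) (fun _ => edgesIn_pairs_nonempty)
    ((integrable_prod_pdelta_iff p s hν).2 hs) ((inOmega_univ_iff_one_lt_norm_blockFactor p s).1 hs)
  refine ⟨V, hV₁, fun I hI => ?_, ?_⟩
  · rw [hV I hI, blockFactor_pairs p s (card_pos.1 (zero_lt_one.trans hI)), ZMod.card]
  · rw [ZP1s, hZ, Fintype.card_option, ZMod.card]

end LogCoulombGas

theorem statement_0 (p : ℕ) [Fact p.Prime] (N : ℕ) (hN : 2 ≤ N)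
    (ν : Measure (P1 p)) [IsProbabilityMeasure ν] (hν : IsGLInvariant p ν)
    (s : Fin N → Fin N → ℂ) :
    (Integrable
        (fun x : Fin N → P1 p =>
          ∏ q ∈ pairs N, ((pdelta p (x q.1) (x q.2) : ℝ) : ℂ) ^ s q.1 q.2)
        (Measure.pi fun _ => ν) ↔ InOmega Finset.univ s) ∧
    (InOmega Finset.univ s →
      ZP1s p ν N s =
        (1 / ((p : ℂ) + 1) ^ (N - 1)) *
          ∑ᶠ S ∈ {S : SplChain N Finset.univ | S.Reduced},
            (((p : ℂ) ^ ((N : ℂ) + ∑ q ∈ pairs N, s q.1 q.2) + 1 -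
                  (S.degree Finset.univ : ℂ)) *
                ((p - 1).descFactorial (S.degree Finset.univ - 2) : ℂ) /
                  ((p : ℂ) ^ eexp Finset.univ s - 1)) *
              ∏ lam ∈ S.branches.erase Finset.univ,
                ((p - 1).descFactorial (S.degree lam - 1) : ℂ) /
                  ((p : ℂ) ^ eexp lam s - 1)) := by
  refine ⟨integrable_prod_pdelta_iff p s hν, fun hs => ?_⟩
  obtain ⟨V, hV₁, hV, hZ⟩ := exists_ZP1s_eq_partitionMean p s hν hs
  have hcard : 1 < (Finset.univ : Finset (Fin N)).card := by rwa [Finset.card_fin]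
  have hne : (Finset.univ : Finset (Fin N)).Nonempty := Finset.card_pos.1 (zero_lt_one.trans hcard)
  have hC : (p : ℂ) ^ eexp Finset.univ s ≠ 1 := fun h => by
    simpa [h] using (one_lt_norm_natCast_cpow_iff p _).2 (hs _ subset_rfl hcard)
  rw [hZ, partitionMean_eq_div (Nat.succ_ne_zero p) V hne, Finset.card_fin, Nat.cast_succ,
    add_splitSum_succ_eq_sum (NeZero.ne p) hC hne (hV _ hcard), natCast_mul_cpow_eexp_univ,
    div_eq_inv_mul, ← one_div]
  congr 1
  refine sum_properPartitions_eq_finsum_reduced_splChain hN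
    (fun d => ((p : ℂ) ^ ((N : ℂ) + ∑ q ∈ pairs N, s q.1 q.2) + 1 - (d : ℂ)) *
      ((p - 1).descFactorial (d - 2) : ℂ) / ((p : ℂ) ^ eexp Finset.univ s - 1))
    (fun B d => ((p - 1).descFactorial (d - 1) : ℂ) / ((p : ℂ) ^ eexp B s - 1)) V hV₁ fun B hB => ?_
  rw [hV B hB, splitSum, Finset.sum_div]
  exact Finset.sum_congr rfl fun T _ => mul_div_right_comm _ _ _

end LogCoulomb
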